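/- arXiv:2507.17967 — 10 statements merged into one kernel-verified Lean document; each statement's English description precedes it below -/
import Mathlib

section
/- Let n ≥ 1 be an integer and let x, y, z be integers such that either x³ − 7x²y + 7xy² + 7y³ = k·zⁿ for some k ∈ {1, 8}, or x³ − 4x²y + 3xy² + y³ = zⁿ. Then there exist integers a, b, c with c = z² and a² + 28b³ = −27cⁿ, and moreover: (a) if (x, y) ≠ (0, 0), then a ≠ 0 and for every prime p with p mod 7 ∈ {2, 3, 4, 5} (i.e. p ≢ 0, ±1 (mod 7)), the p-adic valuation of a is divisible by 3; (b) if gcd(x, y) = 1 and n > 4, then gcd(c, 42ab) = 1. -/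
/-- The norm form of `ℤ[ζ₇ + ζ₇⁻¹]`. -/
def phi28 (u v : ℤ) : ℤ := u ^ 3 + u ^ 2 * v - 2 * u * v ^ 2 - v ^ 3

lemma no_root28 (p : ℕ) [Fact p.Prime]
    (h7 : p % 7 = 2 ∨ p % 7 = 3 ∨ p % 7 = 4 ∨ p % 7 = 5) (t : ZMod p)
    (ht : t ^ 3 + t ^ 2 - 2 * t - 1 = 0) : False := by
  set D : ℕ → ZMod p := fun m => (Polynomial.dickson 1 (1 : ZMod p) m).eval t with hD
  have hrec : ∀ m, D (m + 2) = t * D (m + 1) - D m := by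
    intro m
    simp [hD, Polynomial.dickson_add_two]
  have h0 : D 0 = 2 := by simp [hD, Polynomial.dickson_zero]; norm_num
  have h1 : D 1 = t := by simp [hD, Polynomial.dickson_one]
  have h2 : D 2 = t ^ 2 - 2 := by rw [hrec 0, h1, h0]; ring
  have h3 : D 3 = t ^ 3 - 3 * t := by rw [hrec 1, h2, h1]; ring
  have h4 : D 4 = t ^ 3 - 3 * t := by
    rw [hrec 2, h3, h2]; linear_combination (t - 2) * ht
  have h5 : D 5 = t ^ 2 - 2 := by
    rw [hrec 3, h4, h3]; linear_combination (t - 2) * ht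
  have h6 : D 6 = t := by rw [hrec 4, h5, h4]; ring
  have h7' : D 7 = 2 := by rw [hrec 5, h6, h5]; ring
  have h8 : D 8 = t := by rw [hrec 6, h7', h6]; ring
  have hper : ∀ m, D (m + 7) = D m ∧ D (m + 8) = D (m + 1) := by
    intro m
    induction m with
    | zero => exact ⟨by rw [zero_add, h7', h0], by rw [zero_add, zero_add, h8, h1]⟩
    | succ k ih =>
      refine ⟨ih.2, ?_⟩
      have e1 := hrec (k + 7)
      have e2 := hrec k
      have : D (k + 7 + 1) = D (k + 1) := ih.2
      rw [this, ih.1] at e1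
      exact e1.trans e2.symm
  have hmod : ∀ q r, D (r + 7 * q) = D r := by
    intro q r
    induction q with
    | zero => rfl
    | succ k ih => rw [← ih]; exact (hper (r + 7 * k)).1
  have hp : D p = t := by
    simp only [hD]
    rw [Polynomial.dickson_one_one_zmod_p]
    simp
  have hpm : D (p % 7) = t := by
    rw [← hp, ← hmod (p / 7) (p % 7), Nat.mod_add_div]
  have hseven : (7 : ZMod p) ≠ 0 := by
    intro h
    have h' : ((7 : ℕ) : ZMod p) = 0 := by exact_mod_cast h
    rw [ZMod.natCast_eq_zero_iff] at h'
    have := (Nat.prime_dvd_prime_iff_eq (Fact.out : p.Prime) (by norm_num)).1 h'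
    omega
  have hA : t ^ 2 - 2 = t → False := by
    intro h
    have : (t - 2) * (t + 1) = 0 := by linear_combination h
    rcases mul_eq_zero.1 this with h | h
    · apply hseven
      have : t = 2 := by linear_combination h
      rw [this] at ht; linear_combination ht
    · have : t = -1 := by linear_combination h
      rw [this] at ht
      exact one_ne_zero (α := ZMod p) (by linear_combination ht)
  have hB : t ^ 3 - 3 * t = t → False := by
    intro h
    have : t * ((t - 2) * (t + 2)) = 0 := by linear_combination h
    rcases mul_eq_zero.1 this with h | h
    · rw [h] at ht
      exact one_ne_zero (α := ZMod p) (by linear_combination -ht)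
    rcases mul_eq_zero.1 h with h | h
    · apply hseven
      have : t = 2 := by linear_combination h
      rw [this] at ht; linear_combination ht
    · have : t = -2 := by linear_combination h
      rw [this] at ht
      exact one_ne_zero (α := ZMod p) (by linear_combination -ht)
  rcases h7 with h | h | h | h <;> rw [h] at hpm
  · exact hA (h2.symm.trans hpm)
  · exact hB (h3.symm.trans hpm)
  · exact hB (h4.symm.trans hpm)
  · exact hA (h5.symm.trans hpm)

lemma phi28_dvd (p : ℕ) (hp : p.Prime)
    (h7 : p % 7 = 2 ∨ p % 7 = 3 ∨ p % 7 = 4 ∨ p % 7 = 5) (u v : ℤ)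
    (h : (p : ℤ) ∣ phi28 u v) : (p : ℤ) ∣ u ∧ (p : ℤ) ∣ v := by
  haveI : Fact p.Prime := ⟨hp⟩
  rw [← ZMod.intCast_zmod_eq_zero_iff_dvd] at h
  simp only [← ZMod.intCast_zmod_eq_zero_iff_dvd]
  simp only [phi28] at h
  push_cast at h
  by_cases hv : (v : ZMod p) = 0
  · refine ⟨?_, hv⟩
    rw [hv] at h
    have : (u : ZMod p) ^ 3 = 0 := by linear_combination h
    exact pow_eq_zero_iff (by norm_num) |>.1 this
  · exfalso
    apply no_root28 p h7 ((u : ZMod p) / v)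
    field_simp
    linear_combination h

lemma phi28_main (p : ℕ) (hp : p.Prime)
    (h7 : p % 7 = 2 ∨ p % 7 = 3 ∨ p % 7 = 4 ∨ p % 7 = 5) (N : ℕ) :
    ∀ u v : ℤ, u.natAbs + v.natAbs ≤ N → ¬ (u = 0 ∧ v = 0) →
      phi28 u v ≠ 0 ∧ 3 ∣ padicValInt p (phi28 u v) := by
  haveI : Fact p.Prime := ⟨hp⟩
  induction N with
  | zero => intro u v h1 h2; omega
  | succ N ih =>
    intro u v h1 h2
    by_cases hd : (p : ℤ) ∣ phi28 u v
    · obtain ⟨⟨u', rfl⟩, ⟨v', rfl⟩⟩ := phi28_dvd p hp h7 u v hd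
      have hp0 : (p : ℤ) ≠ 0 := by exact_mod_cast hp.ne_zero
      have h2' : ¬ (u' = 0 ∧ v' = 0) := by
        rintro ⟨rfl, rfl⟩; simp at h2
      have h1' : u'.natAbs + v'.natAbs ≤ N := by
        rw [Int.natAbs_mul, Int.natAbs_mul, Int.natAbs_natCast] at h1
        have := hp.two_le
        have : 2 * (u'.natAbs + v'.natAbs) ≤ p * (u'.natAbs + v'.natAbs) :=
          Nat.mul_le_mul_right _ this
        rw [mul_add p] at this
        omega
      obtain ⟨e1, e2⟩ := ih u' v' h1' h2'
      have e : phi28 (p * u') (p * v') = phi28 u' v' * p * p * p := by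
        simp only [phi28]; ring
      rw [e]
      refine ⟨by positivity, ?_⟩
      rw [padicValInt_mul_eq_succ _ (by positivity), padicValInt_mul_eq_succ _ (by positivity),
        padicValInt_mul_eq_succ _ e1]
      omega
    · exact ⟨fun h => hd (h ▸ dvd_zero _), by rw [padicValInt.eq_zero_of_not_dvd hd]; simp⟩

lemma phi28_a (u v : ℤ) (h : ¬ (u = 0 ∧ v = 0)) : phi28 u v ≠ 0 ∧
    ∀ p : ℕ, p.Prime → (p % 7 = 2 ∨ p % 7 = 3 ∨ p % 7 = 4 ∨ p % 7 = 5) →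
      3 ∣ padicValInt p (phi28 u v) :=
  ⟨(phi28_main 2 Nat.prime_two (by norm_num) _ u v le_rfl h).1,
    fun p hp h7 => (phi28_main p hp h7 _ u v le_rfl h).2⟩

lemma coprime28 (n : ℕ) (a b z : ℤ) (hn : 1 ≤ n)
    (h : a ^ 2 + 28 * b ^ 3 = -27 * (z ^ 2) ^ n)
    (z2 : ¬ (2 : ℤ) ∣ z) (z3 : ¬ (3 : ℤ) ∣ z) (z7 : ¬ (7 : ℤ) ∣ z)
    (H : ∀ p : ℤ, Prime p → ¬ p ∣ 2 → ¬ p ∣ 3 → ¬ p ∣ 7 → p ∣ z → p ∣ b → False) :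
    Int.gcd (z ^ 2) (42 * a * b) = 1 := by
  rw [← Int.isCoprime_iff_gcd_eq_one]
  apply IsCoprime.pow_left
  by_contra hc
  rw [Int.isCoprime_iff_gcd_eq_one] at hc
  obtain ⟨q, hq, hqd⟩ := Nat.exists_prime_and_dvd hc
  have hqz : (q : ℤ) ∣ z := (Int.natCast_dvd_natCast.2 hqd).trans (Int.gcd_dvd_left ..)
  have hqm : (q : ℤ) ∣ 42 * a * b := (Int.natCast_dvd_natCast.2 hqd).trans (Int.gcd_dvd_right ..)
  have P : Prime (q : ℤ) := Nat.prime_iff_prime_int.1 hq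
  have aux : ∀ r : ℕ, r.Prime → ¬ (r : ℤ) ∣ z → ¬ (q : ℤ) ∣ r := by
    intro r hr hrz hqr
    have := (Nat.prime_dvd_prime_iff_eq hq hr).1 (Int.natCast_dvd_natCast.1 hqr)
    exact hrz (this ▸ hqz)
  have q2 : ¬ (q : ℤ) ∣ 2 := aux 2 (by norm_num) z2
  have q3 : ¬ (q : ℤ) ∣ 3 := aux 3 (by norm_num) z3
  have q7 : ¬ (q : ℤ) ∣ 7 := aux 7 (by norm_num) z7
  apply H q P q2 q3 q7 hqz
  have hzn : (q : ℤ) ∣ -27 * (z ^ 2) ^ n :=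
    Dvd.dvd.mul_left (dvd_pow (dvd_pow hqz (by norm_num)) (by omega)) _
  rcases P.dvd_or_dvd hqm with h' | h'
  · rcases P.dvd_or_dvd h' with h' | h'
    · exfalso
      rw [show (42 : ℤ) = 2 * 3 * 7 by norm_num] at h'
      rcases P.dvd_or_dvd h' with h' | h'
      · rcases P.dvd_or_dvd h' with h' | h'
        · exact q2 h'
        · exact q3 h'
      · exact q7 h'
    · have : (q : ℤ) ∣ 2 * 2 * 7 * b ^ 3 := by
        have e : 2 * 2 * 7 * b ^ 3 = -27 * (z ^ 2) ^ n - a ^ 2 := by linarith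
        rw [e]
        exact dvd_sub hzn (dvd_pow h' (by norm_num))
      rcases P.dvd_or_dvd this with h' | h'
      · exfalso
        rcases P.dvd_or_dvd h' with h' | h'
        · rcases P.dvd_or_dvd h' with h' | h' <;> exact q2 h'
        · exact q7 h'
      · exact P.dvd_of_dvd_pow h'
  · exact h'

lemma not_both28 {x y p : ℤ} (h : Int.gcd x y = 1) (hp : Prime p) (hx : p ∣ x) (hy : p ∣ y) :
    False :=
  hp.not_unit ((Int.isCoprime_iff_gcd_eq_one.2 h).isUnit_of_dvd' hx hy)

lemma case_two28 (n : ℕ) (hn : 1 ≤ n) (x y z : ℤ)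
    (h : x ^ 3 - 4 * x ^ 2 * y + 3 * x * y ^ 2 + y ^ 3 = z ^ n) :
    ∃ a b c : ℤ, c = z ^ 2 ∧ a ^ 2 + 28 * b ^ 3 = -27 * c ^ n ∧
      ((x, y) ≠ (0, 0) → a ≠ 0 ∧
        ∀ p : ℕ, p.Prime → (p % 7 = 2 ∨ p % 7 = 3 ∨ p % 7 = 4 ∨ p % 7 = 5) →
          3 ∣ padicValInt p a) ∧
      (Int.gcd x y = 1 → 4 < n → Int.gcd c (42 * a * b) = 1) := by
  have E : phi28 (-x) (-x + 3 * y) ^ 2 + 28 * (-(x ^ 2 - 3 * x * y + 3 * y ^ 2)) ^ 3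
      = -27 * (z ^ 2) ^ n := by
    rw [← pow_mul, mul_comm 2 n, pow_mul, ← h, phi28]; ring
  refine ⟨phi28 (-x) (-x + 3 * y), -(x ^ 2 - 3 * x * y + 3 * y ^ 2), z ^ 2, rfl, E, ?_, ?_⟩
  · intro h0
    apply phi28_a
    rintro ⟨h1, h2⟩
    exact h0 (Prod.ext (by simp; omega) (by simp; omega))
  · intro hg hn4
    have hf : x ^ 3 - 4 * x ^ 2 * y + 3 * x * y ^ 2 + y ^ 3 = phi28 (x - y) (-y) := by
      simp only [phi28]; ring
    have small : ∀ p : ℕ, p.Prime → (p % 7 = 2 ∨ p % 7 = 3 ∨ p % 7 = 4 ∨ p % 7 = 5) →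
        ¬ (p : ℤ) ∣ z := by
      intro p hp h7 hd
      have : (p : ℤ) ∣ phi28 (x - y) (-y) := by
        rw [← hf, h]; exact dvd_pow hd (by omega)
      obtain ⟨h1, h2⟩ := phi28_dvd p hp h7 _ _ this
      rw [dvd_neg] at h2
      have h3 : (p : ℤ) ∣ x := by simpa using dvd_add h1 h2
      exact not_both28 hg (Nat.prime_iff_prime_int.1 hp) h3 h2
    apply coprime28 n _ _ z hn E
    · exact small 2 (by norm_num) (by norm_num)
    · exact small 3 (by norm_num) (by norm_num)
    · intro hd
      have P7 : Prime (7 : ℤ) := by norm_num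
      have h49 : (49 : ℤ) ∣ z ^ n :=
        (pow_dvd_pow_of_dvd hd 2).trans (pow_dvd_pow z (by omega))
      have hx : (7 : ℤ) ∣ x + y := by
        apply P7.dvd_of_dvd_pow (n := 3)
        have e : (x + y) ^ 3 = z ^ n + 7 * (x ^ 2 * y) := by rw [← h]; ring
        rw [e]
        exact dvd_add ((by norm_num : (7 : ℤ) ∣ 49).trans h49) (Dvd.intro _ rfl)
      obtain ⟨t, ht⟩ := hx
      obtain ⟨s, hs⟩ := h49
      have hx' : x = 7 * t - y := by linarith
      rw [hs] at h
      have hy : (7 : ℤ) ∣ y := by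
        apply P7.dvd_of_dvd_pow (n := 3)
        refine ⟨7 * t ^ 3 - 7 * t ^ 2 * y + 2 * t * y ^ 2 - s, ?_⟩
        rw [hx'] at h
        linarith
      exact not_both28 hg P7 (by rw [hx']; exact dvd_sub (Dvd.intro _ rfl) hy) hy
    · intro p P p2 p3 p7 hpz hpb
      rw [dvd_neg] at hpb
      have hpf : p ∣ x ^ 3 - 4 * x ^ 2 * y + 3 * x * y ^ 2 + y ^ 3 := by
        rw [h]; exact dvd_pow hpz (by omega)
      have hy : p ∣ y := by
        have h1 : p ∣ y ^ 2 * (4 * y - 3 * x) := by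
          have e : y ^ 2 * (4 * y - 3 * x) = (x ^ 3 - 4 * x ^ 2 * y + 3 * x * y ^ 2 + y ^ 3)
            - (x - y) * (x ^ 2 - 3 * x * y + 3 * y ^ 2) := by ring
          rw [e]; exact dvd_sub hpf (Dvd.dvd.mul_left hpb _)
        rcases P.dvd_or_dvd h1 with h1 | h1
        · exact P.dvd_of_dvd_pow h1
        · have h2 : p ∣ 7 * y ^ 2 := by
            have e : 7 * y ^ 2 = 9 * (x ^ 2 - 3 * x * y + 3 * y ^ 2)
              + (4 * y - 3 * x) * (3 * x - 5 * y) := by ring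
            rw [e]; exact dvd_add (Dvd.dvd.mul_left hpb _) (Dvd.dvd.mul_right h1 _)
          exact P.dvd_of_dvd_pow ((P.dvd_or_dvd h2).resolve_left p7)
      have hx : p ∣ x := by
        apply P.dvd_of_dvd_pow (n := 2)
        have e : x ^ 2 = (x ^ 2 - 3 * x * y + 3 * y ^ 2) + y * (3 * x - 3 * y) := by ring
        rw [e]; exact dvd_add hpb (Dvd.dvd.mul_right hy _)
      exact not_both28 hg P hx hy

lemma parity28 (x y s : ℤ)
    (h : x ^ 3 - 7 * x ^ 2 * y + 7 * x * y ^ 2 + 7 * y ^ 3 = 2 * s) : ∃ u, x = y + 2 * u := by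
  have : (2 : ℤ) ∣ x - y := by
    apply Int.prime_two.dvd_of_dvd_pow (n := 3)
    refine ⟨s + 2 * x ^ 2 * y - 2 * x * y ^ 2 - 4 * y ^ 3, ?_⟩
    linarith
  obtain ⟨u, hu⟩ := this
  exact ⟨u, by linarith⟩

lemma gcd_shift28 (u y : ℤ) (h : Int.gcd (y + 2 * u) y = 1) : Int.gcd (y + u) u = 1 := by
  rw [← Int.isCoprime_iff_gcd_eq_one] at h ⊢
  obtain ⟨s, t, e⟩ := h
  exact ⟨s + t, s - t, by linear_combination e⟩

lemma case_one28 (n : ℕ) (hn : 1 ≤ n) (x y z : ℤ)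
    (h : x ^ 3 - 7 * x ^ 2 * y + 7 * x * y ^ 2 + 7 * y ^ 3 = z ^ n) :
    ∃ a b c : ℤ, c = z ^ 2 ∧ a ^ 2 + 28 * b ^ 3 = -27 * c ^ n ∧
      ((x, y) ≠ (0, 0) → a ≠ 0 ∧
        ∀ p : ℕ, p.Prime → (p % 7 = 2 ∨ p % 7 = 3 ∨ p % 7 = 4 ∨ p % 7 = 5) →
          3 ∣ padicValInt p a) ∧
      (Int.gcd x y = 1 → 4 < n → Int.gcd c (42 * a * b) = 1) := by
  have E : phi28 (x - 5 * y) (x + y) ^ 2 + 28 * (-(x ^ 2 - 4 * x * y + 7 * y ^ 2)) ^ 3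
      = -27 * (z ^ 2) ^ n := by
    rw [← pow_mul, mul_comm 2 n, pow_mul, ← h, phi28]; ring
  refine ⟨phi28 (x - 5 * y) (x + y), -(x ^ 2 - 4 * x * y + 7 * y ^ 2), z ^ 2, rfl, E, ?_, ?_⟩
  · intro h0
    apply phi28_a
    rintro ⟨h1, h2⟩
    exact h0 (Prod.ext (by simp; omega) (by simp; omega))
  · intro hg hn4
    apply coprime28 n _ _ z hn E
    · intro hd
      obtain ⟨s, hs⟩ : (16 : ℤ) ∣ z ^ n :=
        (pow_dvd_pow_of_dvd hd 4).trans (pow_dvd_pow z (by omega))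
      rw [hs] at h
      obtain ⟨u, rfl⟩ := parity28 x y (8 * s) (by linarith)
      have h2 : ((2 : ℕ) : ℤ) ∣ phi28 y (-u) := by
        refine ⟨s, ?_⟩
        simp only [phi28]
        push_cast
        linarith
      obtain ⟨h3, h4⟩ := phi28_dvd 2 Nat.prime_two (by norm_num) _ _ h2
      exact not_both28 hg Int.prime_two (dvd_add h3 (Dvd.intro _ rfl)) h3
    · intro hd
      have P3 : Prime (3 : ℤ) := by norm_num
      have h3 : (3 : ℤ) ∣ z ^ n := dvd_pow hd (by omega)
      rw [← h] at h3
      have key : ∀ X Y : ZMod 3, X ^ 3 - 7 * X ^ 2 * Y + 7 * X * Y ^ 2 + 7 * Y ^ 3 = 0 →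
          X = 0 ∧ Y = 0 := by decide
      have h3' := (ZMod.intCast_zmod_eq_zero_iff_dvd _ 3).2 h3
      push_cast at h3'
      obtain ⟨hx, hy⟩ := key _ _ h3'
      exact not_both28 hg P3 ((ZMod.intCast_zmod_eq_zero_iff_dvd _ 3).1 hx)
        ((ZMod.intCast_zmod_eq_zero_iff_dvd _ 3).1 hy)
    · intro hd
      have P7 : Prime (7 : ℤ) := by norm_num
      have h49 : (49 : ℤ) ∣ z ^ n :=
        (pow_dvd_pow_of_dvd hd 2).trans (pow_dvd_pow z (by omega))
      obtain ⟨s, hs⟩ := h49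
      rw [hs] at h
      have hx : (7 : ℤ) ∣ x := by
        apply P7.dvd_of_dvd_pow (n := 3)
        exact ⟨7 * s + x ^ 2 * y - x * y ^ 2 - y ^ 3, by linarith⟩
      have hy : (7 : ℤ) ∣ y := by
        obtain ⟨t, rfl⟩ := hx
        apply P7.dvd_of_dvd_pow (n := 3)
        exact ⟨s - 7 * t ^ 3 + 7 * t ^ 2 * y - t * y ^ 2, by linarith⟩
      exact not_both28 hg P7 hx hy
    · intro p P p2 p3 p7 hpz hpb
      rw [dvd_neg] at hpb
      have hpf : p ∣ x ^ 3 - 7 * x ^ 2 * y + 7 * x * y ^ 2 + 7 * y ^ 3 := by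
        rw [h]; exact dvd_pow hpz (by omega)
      have n4 : ¬ p ∣ 2 * 2 := fun h4 => (P.dvd_or_dvd h4).elim p2 p2
      have hy : p ∣ y := by
        have h1 : p ∣ 2 * 2 * (y ^ 2 * (7 * y - 3 * x)) := by
          have e : 2 * 2 * (y ^ 2 * (7 * y - 3 * x)) =
            (x ^ 3 - 7 * x ^ 2 * y + 7 * x * y ^ 2 + 7 * y ^ 3)
            - (x - 3 * y) * (x ^ 2 - 4 * x * y + 7 * y ^ 2) := by ring
          rw [e]; exact dvd_sub hpf (Dvd.dvd.mul_left hpb _)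
        rcases P.dvd_or_dvd ((P.dvd_or_dvd h1).resolve_left n4) with h1 | h1
        · exact P.dvd_of_dvd_pow h1
        · have h2 : p ∣ 2 * 2 * (7 * y ^ 2) := by
            have e : 2 * 2 * (7 * y ^ 2) = 9 * (x ^ 2 - 4 * x * y + 7 * y ^ 2)
              + (7 * y - 3 * x) * (3 * x - 5 * y) := by ring
            rw [e]; exact dvd_add (Dvd.dvd.mul_left hpb _) (Dvd.dvd.mul_right h1 _)
          exact P.dvd_of_dvd_pow
            ((P.dvd_or_dvd ((P.dvd_or_dvd h2).resolve_left n4)).resolve_left p7)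
      have hx : p ∣ x := by
        apply P.dvd_of_dvd_pow (n := 2)
        have e : x ^ 2 = (x ^ 2 - 4 * x * y + 7 * y ^ 2) + y * (4 * x - 7 * y) := by ring
        rw [e]; exact dvd_add hpb (Dvd.dvd.mul_right hy _)
      exact not_both28 hg P hx hy


/-- Integer solutions of `x³ − 7x²y + 7xy² + 7y³ = k·zⁿ` (for `k ∈ {1,8}`) or of
`x³ − 4x²y + 3xy² + y³ = zⁿ` give rise to solutions of `a² + 28b³ = −27cⁿ`
with `c = z²`, satisfying additional arithmetic conditions. -/
theorem norm_to_fermat_28 (n : ℕ) (hn : 1 ≤ n) (x y z : ℤ)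
    (h : (∃ k : ℤ, (k = 1 ∨ k = 8) ∧
            x ^ 3 - 7 * x ^ 2 * y + 7 * x * y ^ 2 + 7 * y ^ 3 = k * z ^ n) ∨
         x ^ 3 - 4 * x ^ 2 * y + 3 * x * y ^ 2 + y ^ 3 = z ^ n) :
    ∃ a b c : ℤ, c = z ^ 2 ∧ a ^ 2 + 28 * b ^ 3 = -27 * c ^ n ∧
      ((x, y) ≠ (0, 0) → a ≠ 0 ∧
        ∀ p : ℕ, p.Prime → (p % 7 = 2 ∨ p % 7 = 3 ∨ p % 7 = 4 ∨ p % 7 = 5) →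
          3 ∣ padicValInt p a) ∧
      (Int.gcd x y = 1 → 4 < n → Int.gcd c (42 * a * b) = 1) := by
  rcases h with ⟨k, rfl | rfl, h⟩ | h
  · exact case_one28 n hn x y z (by linarith)
  · obtain ⟨u, rfl⟩ := parity28 x y (4 * z ^ n) (by linarith)
    obtain ⟨a, b, c, h1, h2, h3, h4⟩ := case_two28 n hn (y + u) u z (by linarith)
    refine ⟨a, b, c, h1, h2, fun h0 => h3 ?_, fun hg => h4 (gcd_shift28 u y hg)⟩
    intro h5
    apply h0
    simp only [Prod.mk.injEq] at h5 ⊢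
    omega
  · exact case_two28 n hn x y z h
end

section
/- Let n ≥ 1 be an integer and let x, y, z be integers such that either x³ − 7x²y + 7xy² + 7y³ = 7k·zⁿ for some k ∈ {1, 8}, or x³ − 4x²y + 3xy² + y³ = 7zⁿ. Then there exist integers a, b, c with c = z² and a² + 196b³ = −27cⁿ, and moreover: (a) if (x, y) ≠ (0, 0), then a ≠ 0 and for every prime p with p mod 7 ∈ {2, 3, 4, 5} (i.e. p ≢ 0, ±1 (mod 7)), the p-adic valuation of a is divisible by 3; (b) if gcd(x, y) = 1 and n > 4, then gcd(c, 42ab) = 1. -/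
/-- A root of `X³ - 4X² + 3X + 1` in `ZMod p` forces `p ≡ 0, ±1 (mod 7)`. -/
theorem aux_no_root (p : ℕ) (hp : p.Prime)
    (h7 : p % 7 = 2 ∨ p % 7 = 3 ∨ p % 7 = 4 ∨ p % 7 = 5) (r : ZMod p)
    (hr : r ^ 3 - 4 * r ^ 2 + 3 * r + 1 = 0) : False := by
  have : Fact p.Prime := ⟨hp⟩
  let K := AlgebraicClosure (ZMod p)
  let s : K := algebraMap (ZMod p) K r
  have hs : s ^ 3 - 4 * s ^ 2 + 3 * s + 1 = 0 := by
    have := congrArg (algebraMap (ZMod p) K) hr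
    have e4 : algebraMap (ZMod p) K 4 = 4 := map_ofNat _ 4
    have e3 : algebraMap (ZMod p) K 3 = 3 := map_ofNat _ 3
    simpa [s, e3, e4] using this
  have hsp : s ^ p = s := by
    simp only [s]
    rw [← map_pow, ZMod.pow_card]
  have : CharP K p := charP_of_injective_algebraMap (algebraMap (ZMod p) K).injective p
  -- `w = s ^ 2 - 3 s`-type shift: find the value `θ` with `θ³ + θ² - 2θ - 1 = 0`
  obtain ⟨θ, hθ, hθp⟩ : ∃ θ : K, θ ^ 3 + θ ^ 2 - 2 * θ - 1 = 0 ∧ θ ^ p = θ := by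
    refine ⟨1 - s, by linear_combination -hs, ?_⟩
    rw [sub_pow_char, one_pow, hsp]
  obtain ⟨ζ, hζ⟩ : ∃ ζ : K, ζ ^ 2 - θ * ζ + 1 = 0 := by
    have hd : (Polynomial.X ^ 2 - Polynomial.C θ * Polynomial.X + 1 : Polynomial K).degree = 2 := by
      compute_degree!
    obtain ⟨ζ, h⟩ := IsAlgClosed.exists_root
      (Polynomial.X ^ 2 - Polynomial.C θ * Polynomial.X + 1 : Polynomial K) (by rw [hd]; decide)
    exact ⟨ζ, by simpa [Polynomial.IsRoot] using h⟩
  have hz0 : ζ ≠ 0 := by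
    rintro rfl
    simp at hζ
  have hcyc : ζ ^ 6 + ζ ^ 5 + ζ ^ 4 + ζ ^ 3 + ζ ^ 2 + ζ + 1 = 0 := by
    have h1 : θ * ζ = ζ ^ 2 + 1 := by linear_combination -hζ
    have h2 : (θ * ζ) ^ 3 + (θ * ζ) ^ 2 * ζ - 2 * (θ * ζ) * ζ ^ 2 - ζ ^ 3 = 0 := by
      linear_combination ζ ^ 3 * hθ
    rw [h1] at h2
    linear_combination h2
  have hz7 : ζ ^ 7 = 1 := by linear_combination (ζ - 1) * hcyc
  have hne7 : (7 : K) ≠ 0 := by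
    intro h
    have : ((7 : ℕ) : K) = 0 := by exact_mod_cast h
    rw [CharP.cast_eq_zero_iff K p] at this
    have := (Nat.prime_dvd_prime_iff_eq hp (by norm_num)).1 this
    omega
  have hz1 : ζ ≠ 1 := by
    rintro rfl
    apply hne7
    linear_combination hcyc
  have hord : orderOf ζ = 7 := by
    have : Fact (Nat.Prime 7) := ⟨by norm_num⟩
    exact orderOf_eq_prime hz7 hz1
  have hζp : (ζ ^ p) ^ 2 - θ * ζ ^ p + 1 = 0 := by
    have h1 : θ * ζ = ζ ^ 2 + 1 := by linear_combination -hζ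
    have h2 := congrArg (· ^ p) h1
    simp only [mul_pow, add_pow_char, one_pow, hθp] at h2
    linear_combination -h2 + (by ring : (ζ ^ p) ^ 2 = (ζ ^ 2) ^ p)
  have hprod : (ζ ^ p - ζ) * (ζ ^ p * ζ - 1) = 0 := by
    linear_combination ζ * hζp - ζ ^ p * hζ
  have hp1 := hp.one_lt
  rcases mul_eq_zero.1 hprod with h | h
  · have h1 : ζ ^ (p - 1) = 1 := by
      apply mul_right_cancel₀ hz0
      rw [← pow_succ, Nat.sub_add_cancel hp1.le]
      linear_combination h
    have := orderOf_dvd_of_pow_eq_one h1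
    rw [hord] at this
    omega
  · have h1 : ζ ^ (p + 1) = 1 := by
      rw [pow_succ]
      linear_combination h
    have := orderOf_dvd_of_pow_eq_one h1
    rw [hord] at this
    omega

/-- The norm form. -/
def auxF (u v : ℤ) : ℤ := u ^ 3 - 4 * u ^ 2 * v + 3 * u * v ^ 2 + v ^ 3

theorem auxF_dvd (p : ℕ) (hp : p.Prime)
    (h7 : p % 7 = 2 ∨ p % 7 = 3 ∨ p % 7 = 4 ∨ p % 7 = 5) (u v : ℤ)
    (h : (p : ℤ) ∣ auxF u v) : (p : ℤ) ∣ u ∧ (p : ℤ) ∣ v := by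
  have : Fact p.Prime := ⟨hp⟩
  have hpi : Prime (p : ℤ) := Nat.prime_iff_prime_int.1 hp
  have hv : (p : ℤ) ∣ v := by
    by_contra hv
    have hv' : (v : ZMod p) ≠ 0 := by
      rwa [Ne, ZMod.intCast_zmod_eq_zero_iff_dvd]
    have h' : (u : ZMod p) ^ 3 - 4 * u ^ 2 * v + 3 * u * v ^ 2 + v ^ 3 = 0 := by
      have := (ZMod.intCast_zmod_eq_zero_iff_dvd (auxF u v) p).2 h
      simpa [auxF] using this
    apply aux_no_root p hp h7 ((u : ZMod p) / v)
    field_simp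
    linear_combination h'
  refine ⟨?_, hv⟩
  apply hpi.dvd_of_dvd_pow (n := 3)
  have h2 : (p : ℤ) ∣ v * (4 * u ^ 2 - 3 * u * v - v ^ 2) := Dvd.dvd.mul_right hv _
  have := dvd_add h h2
  convert this using 1
  unfold auxF
  ring

theorem auxF_val (p : ℕ) (hp : p.Prime)
    (h7 : p % 7 = 2 ∨ p % 7 = 3 ∨ p % 7 = 4 ∨ p % 7 = 5) :
    ∀ (N : ℕ) (u v : ℤ), u.natAbs + v.natAbs ≤ N → ¬ (u = 0 ∧ v = 0) →
      auxF u v ≠ 0 ∧ 3 ∣ padicValInt p (auxF u v) := by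
  have : Fact p.Prime := ⟨hp⟩
  have hp0 : (p : ℤ) ≠ 0 := by exact_mod_cast hp.ne_zero
  intro N
  induction N with
  | zero => intro u v h1 h2; omega
  | succ N ih =>
    intro u v h1 h2
    by_cases hd : (p : ℤ) ∣ auxF u v
    · obtain ⟨⟨u', rfl⟩, ⟨v', rfl⟩⟩ := auxF_dvd p hp h7 u v hd
      have hne : ¬ (u' = 0 ∧ v' = 0) := by
        rintro ⟨rfl, rfl⟩
        simp at h2
      have hlt : u'.natAbs + v'.natAbs ≤ N := by
        simp only [Int.natAbs_mul, Int.natAbs_natCast] at h1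
        have := hp.two_le
        have h3 : 2 * u'.natAbs ≤ p * u'.natAbs := Nat.mul_le_mul_right _ this
        have h4 : 2 * v'.natAbs ≤ p * v'.natAbs := Nat.mul_le_mul_right _ this
        omega
      obtain ⟨h5, h6⟩ := ih u' v' hlt hne
      have he : auxF (p * u') (p * v') = (p : ℤ) ^ 3 * auxF u' v' := by
        unfold auxF; ring
      rw [he]
      refine ⟨mul_ne_zero (pow_ne_zero _ hp0) h5, ?_⟩
      rw [padicValInt.mul (pow_ne_zero _ hp0) h5]
      have : padicValInt p ((p : ℤ) ^ 3) = 3 := by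
        simp [padicValInt, Int.natAbs_pow]
      rw [this]
      omega
    · refine ⟨fun h => hd (h ▸ dvd_zero _), ?_⟩
      rw [padicValInt.eq_zero_of_not_dvd hd]
      exact dvd_zero _

theorem aux_a (a u v : ℤ) (huv : ¬ (u = 0 ∧ v = 0)) (h : 7 * a = auxF u v) :
    a ≠ 0 ∧ ∀ p : ℕ, p.Prime → (p % 7 = 2 ∨ p % 7 = 3 ∨ p % 7 = 4 ∨ p % 7 = 5) →
          3 ∣ padicValInt p a := by
  have ha : a ≠ 0 := by
    rintro rfl
    exact (auxF_val 2 Nat.prime_two (by norm_num) _ u v le_rfl huv).1 (by rw [← h]; ring)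
  refine ⟨ha, fun p hp h7 => ?_⟩
  have : Fact p.Prime := ⟨hp⟩
  have h2 := (auxF_val p hp h7 _ u v le_rfl huv).2
  rw [← h, padicValInt.mul (by norm_num) ha] at h2
  have : padicValInt p 7 = 0 := by
    apply padicValInt.eq_zero_of_not_dvd
    intro h
    have := (Nat.prime_dvd_prime_iff_eq hp (by norm_num : Nat.Prime 7)).1 (by exact_mod_cast h)
    omega
  rwa [this, zero_add] at h2

theorem aux_gcd (n : ℕ) (hn : n ≠ 0) (a b z : ℤ) (he : a ^ 2 + 196 * b ^ 3 = -27 * (z ^ 2) ^ n)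
    (hb : ∀ p : ℕ, p.Prime → (p : ℤ) ∣ z → p ≠ 2 ∧ p ≠ 3 ∧ p ≠ 7 ∧ ¬ (p : ℤ) ∣ b) :
    Int.gcd (z ^ 2) (42 * a * b) = 1 := by
  by_contra hg
  obtain ⟨p, hp, hd⟩ := Nat.exists_prime_and_dvd hg
  have hpi : Prime (p : ℤ) := Nat.prime_iff_prime_int.1 hp
  have h1 : (p : ℤ) ∣ z ^ 2 := (Int.natCast_dvd_natCast.2 hd).trans (Int.gcd_dvd_left _ _)
  have h2 : (p : ℤ) ∣ 42 * a * b := (Int.natCast_dvd_natCast.2 hd).trans (Int.gcd_dvd_right _ _)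
  have hz := hpi.dvd_of_dvd_pow h1
  obtain ⟨n2, n3, n7, nb⟩ := hb p hp hz
  have key : ∀ q : ℕ, q.Prime → p ≠ q → ¬ (p : ℤ) ∣ (q : ℤ) := by
    intro q hq hne h
    exact hne ((Nat.prime_dvd_prime_iff_eq hp hq).1 (by exact_mod_cast h))
  have k2 := key 2 (by norm_num) n2
  have k3 := key 3 (by norm_num) n3
  have k7 := key 7 (by norm_num) n7
  have ha : (p : ℤ) ∣ a := by
    rcases hpi.dvd_or_dvd h2 with h | h
    · rcases hpi.dvd_or_dvd h with h | h
      · exfalso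
        rw [show (42 : ℤ) = ((2 : ℕ) : ℤ) * ((3 : ℕ) : ℤ) * ((7 : ℕ) : ℤ) by norm_num] at h
        rcases hpi.dvd_or_dvd h with h | h
        · rcases hpi.dvd_or_dvd h with h | h
          · exact k2 h
          · exact k3 h
        · exact k7 h
      · exact h
    · exact absurd h nb
  have h3 : (p : ℤ) ∣ 196 * b ^ 3 := by
    have e : 196 * b ^ 3 = -27 * (z ^ 2) ^ n - a * a := by linear_combination he
    rw [e]
    exact dvd_sub (Dvd.dvd.mul_left (dvd_pow h1 hn) _) (Dvd.dvd.mul_right ha _)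
  rw [show (196 : ℤ) = (((2 : ℕ) : ℤ) * ((7 : ℕ) : ℤ)) ^ 2 by norm_num] at h3
  rcases hpi.dvd_or_dvd h3 with h | h
  · rcases hpi.dvd_or_dvd (hpi.dvd_of_dvd_pow h) with h | h
    · exact k2 h
    · exact k7 h
  · exact nb (hpi.dvd_of_dvd_pow h)

/-- A prime that divides `q * u` with `q` a different prime divides `u`. -/
theorem aux_cancel (p q : ℕ) (hp : p.Prime) (hq : q.Prime) (hne : p ≠ q) (u : ℤ)
    (h : (p : ℤ) ∣ q * u) : (p : ℤ) ∣ u := by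
  have hpi : Prime (p : ℤ) := Nat.prime_iff_prime_int.1 hp
  rcases hpi.dvd_or_dvd h with h | h
  · exact absurd ((Nat.prime_dvd_prime_iff_eq hp hq).1 (by exact_mod_cast h)) hne
  · exact h

/-- Second type: `49t³ - 49t²y + 14ty² - y³ = zⁿ`. -/
theorem aux_core2 (n : ℕ) (hn : 1 ≤ n) (t y z : ℤ)
    (h : 49 * t ^ 3 - 49 * t ^ 2 * y + 14 * t * y ^ 2 - y ^ 3 = z ^ n) :
    ∃ a b c : ℤ, c = z ^ 2 ∧ a ^ 2 + 196 * b ^ 3 = -27 * c ^ n ∧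
      (¬ (t = 0 ∧ y = 0) → a ≠ 0 ∧
        ∀ p : ℕ, p.Prime → (p % 7 = 2 ∨ p % 7 = 3 ∨ p % 7 = 4 ∨ p % 7 = 5) →
          3 ∣ padicValInt p a) ∧
      ((∀ p : ℕ, p.Prime → (p : ℤ) ∣ 7 * t → (p : ℤ) ∣ y → False) →
        Int.gcd c (42 * a * b) = 1) := by
  have he : (49 * t ^ 3 - 147 * t ^ 2 * y + 84 * t * y ^ 2 - 13 * y ^ 3) ^ 2
      + 196 * (-(7 * t ^ 2 - 5 * t * y + y ^ 2)) ^ 3 = -27 * (z ^ 2) ^ n := by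
    rw [← pow_mul, mul_comm 2 n, pow_mul, ← h]
    ring
  refine ⟨_, _, _, rfl, he, ?_, ?_⟩
  · intro h0
    apply aux_a _ (9 * y - 21 * t) (5 * y - 14 * t)
    · rintro ⟨h1, h2⟩
      omega
    · unfold auxF; ring
  · intro hc
    apply aux_gcd n (by omega) _ _ _ he
    intro p hp hz
    have hpi : Prime (p : ℤ) := Nat.prime_iff_prime_int.1 hp
    have hg : (p : ℤ) ∣ 49 * t ^ 3 - 49 * t ^ 2 * y + 14 * t * y ^ 2 - y ^ 3 :=
      h ▸ dvd_pow hz (by omega)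
    have hin : ¬ (p % 7 = 2 ∨ p % 7 = 3 ∨ p % 7 = 4 ∨ p % 7 = 5) := by
      intro hi
      have h1 : (p : ℤ) ∣ auxF (7 * t - y) y := by
        have e : auxF (7 * t - y) y
          = 7 * (49 * t ^ 3 - 49 * t ^ 2 * y + 14 * t * y ^ 2 - y ^ 3) := by
          unfold auxF; ring
        rw [e]
        exact Dvd.dvd.mul_left hg _
      obtain ⟨h2, h3⟩ := auxF_dvd p hp hi _ _ h1
      exact hc p hp (by simpa using dvd_add h2 h3) h3
    have n7 : p ≠ 7 := by
      rintro rfl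
      refine hc 7 hp ⟨t, by norm_num⟩ (hpi.dvd_of_dvd_pow (n := 3) ?_)
      push_cast at hg ⊢
      have : y ^ 3 = 7 * (7 * t ^ 3 - 7 * t ^ 2 * y + 2 * t * y ^ 2)
        - (49 * t ^ 3 - 49 * t ^ 2 * y + 14 * t * y ^ 2 - y ^ 3) := by ring
      rw [this]
      exact dvd_sub (Dvd.intro _ rfl) hg
    refine ⟨by rintro rfl; simp at hin, by rintro rfl; simp at hin, n7, ?_⟩
    intro hb
    rw [dvd_neg] at hb
    have hyt : (p : ℤ) ∣ t → False := by
      intro ht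
      refine hc p hp (Dvd.dvd.mul_left ht _) (hpi.dvd_of_dvd_pow (n := 2) ?_)
      have : y ^ 2 = (7 * t ^ 2 - 5 * t * y + y ^ 2) - t * (7 * t - 5 * y) := by ring
      rw [this]
      exact dvd_sub hb (Dvd.dvd.mul_right ht _)
    have h1 : (p : ℤ) ∣ t ^ 2 * (3 * y - 14 * t) := by
      have : t ^ 2 * (3 * y - 14 * t) = 
        (49 * t ^ 3 - 49 * t ^ 2 * y + 14 * t * y ^ 2 - y ^ 3)
         + (7 * t ^ 2 - 5 * t * y + y ^ 2) * (y - 9 * t) := by ring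
      rw [this]
      exact dvd_add hg (Dvd.dvd.mul_right hb _)
    rcases hpi.dvd_or_dvd h1 with h2 | h2
    · exact hyt (hpi.dvd_of_dvd_pow h2)
    · have h3 : (p : ℤ) ∣ (7 * t) ^ 2 := by
        have : (7 * t) ^ 2 = 9 * (7 * t ^ 2 - 5 * t * y + y ^ 2)
          - (3 * y - 14 * t) * (3 * y - t) := by ring
        rw [this]
        exact dvd_sub (Dvd.dvd.mul_left hb _) (Dvd.dvd.mul_right h2 _)
      exact hyt (aux_cancel p 7 hp (by norm_num) n7 t (hpi.dvd_of_dvd_pow h3))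

/-- First type: `49t³ - 49t²y + 7ty² + y³ = zⁿ`. -/
theorem aux_core1 (n : ℕ) (hn : 1 ≤ n) (t y z : ℤ)
    (h : 49 * t ^ 3 - 49 * t ^ 2 * y + 7 * t * y ^ 2 + y ^ 3 = z ^ n) :
    ∃ a b c : ℤ, c = z ^ 2 ∧ a ^ 2 + 196 * b ^ 3 = -27 * c ^ n ∧
      (¬ (t = 0 ∧ y = 0) → a ≠ 0 ∧
        ∀ p : ℕ, p.Prime → (p % 7 = 2 ∨ p % 7 = 3 ∨ p % 7 = 4 ∨ p % 7 = 5) →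
          3 ∣ padicValInt p a) ∧
      ((∀ p : ℕ, p.Prime → (p : ℤ) ∣ 7 * t → (p : ℤ) ∣ y → False) → 4 < n →
        Int.gcd c (42 * a * b) = 1) := by
  have he : (49 * (y - 2 * t) ^ 3 - 49 * (y - 2 * t) ^ 2 * (2 * y - 7 * t)
        + 7 * (y - 2 * t) * (2 * y - 7 * t) ^ 2 + (2 * y - 7 * t) ^ 3) ^ 2
      + 196 * (-(7 * t ^ 2 - 4 * t * y + y ^ 2)) ^ 3 = -27 * (z ^ 2) ^ n := by
    rw [← pow_mul, mul_comm 2 n, pow_mul, ← h]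
    ring
  refine ⟨_, _, _, rfl, he, ?_, ?_⟩
  · intro h0
    apply aux_a _ (21 * t - 3 * y) (14 * t - 4 * y)
    · rintro ⟨h1, h2⟩
      omega
    · unfold auxF; ring
  · intro hc hn4
    apply aux_gcd n (by omega) _ _ _ he
    intro p hp hz
    have hpi : Prime (p : ℤ) := Nat.prime_iff_prime_int.1 hp
    have hg : (p : ℤ) ∣ 49 * t ^ 3 - 49 * t ^ 2 * y + 7 * t * y ^ 2 + y ^ 3 :=
      h ▸ dvd_pow hz (by omega)
    have n2 : p ≠ 2 := by
      rintro rfl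
      obtain ⟨s, rfl⟩ : ∃ s, t = y + 2 * s := by
        have h1 : (2 : ℤ) ∣ (t - y) ^ 3 := by
          have : (t - y) ^ 3 = (49 * t ^ 3 - 49 * t ^ 2 * y + 7 * t * y ^ 2 + y ^ 3)
            - 2 * (24 * t ^ 3 - 23 * t ^ 2 * y + 2 * t * y ^ 2 + y ^ 3) := by ring
          rw [this]
          exact dvd_sub hg (Dvd.intro _ rfl)
        obtain ⟨s, hs⟩ := Int.prime_two.dvd_of_dvd_pow h1
        exact ⟨s, by linear_combination hs⟩
      have h32 : (32 : ℤ) ∣ z ^ n :=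
        (by simpa using pow_dvd_pow_of_dvd hz 5 : (32 : ℤ) ∣ z ^ 5).trans (pow_dvd_pow z hn4)
      have e : z ^ n = 8 * (y ^ 3 + 14 * y ^ 2 * s + 49 * y * s ^ 2 + 49 * s ^ 3) := by
        rw [← h]; ring
      have h2 : (2 : ℤ) ∣ y ^ 3 + 14 * y ^ 2 * s + 49 * y * s ^ 2 + 49 * s ^ 3 := by
        rw [e] at h32
        omega
      have h3 : ((2 : ℕ) : ℤ) ∣ auxF (7 * s + y) (-y) := by
        have e : auxF (7 * s + y) (-y)
          = 7 * (y ^ 3 + 14 * y ^ 2 * s + 49 * y * s ^ 2 + 49 * s ^ 3) := by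
          unfold auxF; ring
        rw [e]
        exact Dvd.dvd.mul_left h2 _
      obtain ⟨h4, h5⟩ := auxF_dvd 2 hp (by norm_num) _ _ h3
      have h6 : ((2 : ℕ) : ℤ) ∣ y := (dvd_neg).1 h5
      refine hc 2 hp ?_ h6
      push_cast at h6 ⊢
      omega
    have n3 : p ≠ 3 := by
      rintro rfl
      have h1 : ((3 : ℕ) : ℤ) ∣ auxF (7 * t - 5 * y) (-2 * y) := by
        have e : auxF (7 * t - 5 * y) (-2 * y)
          = 7 * (49 * t ^ 3 - 49 * t ^ 2 * y + 7 * t * y ^ 2 + y ^ 3) := by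
          unfold auxF; ring
        rw [e]
        exact Dvd.dvd.mul_left hg _
      obtain ⟨h2, h3⟩ := auxF_dvd 3 hp (by norm_num) _ _ h1
      push_cast at h2 h3
      exact hc 3 hp (by push_cast; omega) (by push_cast; omega)
    have n7 : p ≠ 7 := by
      rintro rfl
      refine hc 7 hp ⟨t, by norm_num⟩ (hpi.dvd_of_dvd_pow (n := 3) ?_)
      push_cast at hg ⊢
      have : y ^ 3 = (49 * t ^ 3 - 49 * t ^ 2 * y + 7 * t * y ^ 2 + y ^ 3)
        - 7 * (7 * t ^ 3 - 7 * t ^ 2 * y + t * y ^ 2) := by ring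
      rw [this]
      exact dvd_sub hg (Dvd.intro _ rfl)
    refine ⟨n2, n3, n7, ?_⟩
    intro hb
    rw [dvd_neg] at hb
    have hyt : (p : ℤ) ∣ t → False := by
      intro ht
      refine hc p hp (Dvd.dvd.mul_left ht _) (hpi.dvd_of_dvd_pow (n := 2) ?_)
      have : y ^ 2 = (7 * t ^ 2 - 4 * t * y + y ^ 2) - t * (7 * t - 4 * y) := by ring
      rw [this]
      exact dvd_sub hb (Dvd.dvd.mul_right ht _)
    have h1 : (p : ℤ) ∣ (2 * t) ^ 2 * (3 * y + 7 * t) := by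
      have : (2 * t) ^ 2 * (3 * y + 7 * t) =
         (7 * t ^ 2 - 4 * t * y + y ^ 2) * (y + 11 * t)
         - (49 * t ^ 3 - 49 * t ^ 2 * y + 7 * t * y ^ 2 + y ^ 3) := by ring
      rw [this]
      exact dvd_sub (Dvd.dvd.mul_right hb _) hg
    rcases hpi.dvd_or_dvd h1 with h2 | h2
    · exact hyt (aux_cancel p 2 hp (by norm_num) n2 t (hpi.dvd_of_dvd_pow h2))
    · have h3 : (p : ℤ) ∣ (2 * (7 * t)) ^ 2 := by
        have : (2 * (7 * t)) ^ 2 = 9 * (7 * t ^ 2 - 4 * t * y + y ^ 2)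
          - (3 * y + 7 * t) * (3 * y - 19 * t) := by ring
        rw [this]
        exact dvd_sub (Dvd.dvd.mul_left hb _) (Dvd.dvd.mul_right h2 _)
      exact hyt (aux_cancel p 7 hp (by norm_num) n7 t
        (aux_cancel p 2 hp (by norm_num) n2 _ (hpi.dvd_of_dvd_pow h3)))

theorem aux_cop (x y : ℤ) (h : Int.gcd x y = 1) (p : ℕ) (hp : p.Prime)
    (hx : (p : ℤ) ∣ x) (hy : (p : ℤ) ∣ y) : False := by
  have h1 := Int.dvd_coe_gcd hx hy
  rw [h] at h1
  exact hp.one_lt.ne' (Nat.dvd_one.1 (by exact_mod_cast h1))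


/-- Integer solutions of `x³ − 7x²y + 7xy² + 7y³ = 7k·zⁿ` (for `k ∈ {1,8}`) or of
`x³ − 4x²y + 3xy² + y³ = 7zⁿ` give rise to solutions of `a² + 196b³ = −27cⁿ`
with `c = z²`, satisfying additional arithmetic conditions. -/
theorem norm_to_fermat_196 (n : ℕ) (hn : 1 ≤ n) (x y z : ℤ)
    (h : (∃ k : ℤ, (k = 1 ∨ k = 8) ∧
            x ^ 3 - 7 * x ^ 2 * y + 7 * x * y ^ 2 + 7 * y ^ 3 = 7 * k * z ^ n) ∨
         x ^ 3 - 4 * x ^ 2 * y + 3 * x * y ^ 2 + y ^ 3 = 7 * z ^ n) :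
    ∃ a b c : ℤ, c = z ^ 2 ∧ a ^ 2 + 196 * b ^ 3 = -27 * c ^ n ∧
      ((x, y) ≠ (0, 0) → a ≠ 0 ∧
        ∀ p : ℕ, p.Prime → (p % 7 = 2 ∨ p % 7 = 3 ∨ p % 7 = 4 ∨ p % 7 = 5) →
          3 ∣ padicValInt p a) ∧
      (Int.gcd x y = 1 → 4 < n → Int.gcd c (42 * a * b) = 1) := by
  have h7 : Prime (7 : ℤ) := by norm_num
  rcases h with ⟨k, hk, h⟩ | h
  · obtain ⟨t, rfl⟩ : (7 : ℤ) ∣ x := by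
      apply h7.dvd_of_dvd_pow (n := 3)
      exact ⟨k * z ^ n + x ^ 2 * y - x * y ^ 2 - y ^ 3, by linear_combination h⟩
    have h' : 49 * t ^ 3 - 49 * t ^ 2 * y + 7 * t * y ^ 2 + y ^ 3 = k * z ^ n := by
      apply mul_left_cancel₀ (by norm_num : (7 : ℤ) ≠ 0)
      linear_combination h
    rcases hk with rfl | rfl
    · obtain ⟨a, b, c, hc, he, h1, h2⟩ := aux_core1 n hn t y z (by linear_combination h')
      refine ⟨a, b, c, hc, he, fun h0 => h1 ?_, fun hg hn4 => h2 ?_ hn4⟩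
      · rintro ⟨rfl, rfl⟩
        simp at h0
      · intro p hp hx hy
        exact aux_cop _ _ hg p hp hx hy
    · obtain ⟨s, rfl⟩ : ∃ s, t = y + 2 * s := by
        have h1 : (2 : ℤ) ∣ (t - y) ^ 3 :=
          ⟨4 * z ^ n - (24 * t ^ 3 - 23 * t ^ 2 * y + 2 * t * y ^ 2 + y ^ 3),
            by linear_combination h'⟩
        obtain ⟨s, hs⟩ := Int.prime_two.dvd_of_dvd_pow h1
        exact ⟨s, by linear_combination hs⟩
      obtain ⟨a, b, c, hc, he, h1, h2⟩ := aux_core2 n hn s (-y) z (by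
        apply mul_left_cancel₀ (by norm_num : (8 : ℤ) ≠ 0)
        linear_combination h')
      refine ⟨a, b, c, hc, he, fun h0 => h1 ?_, fun hg hn4 => h2 ?_⟩
      · rintro ⟨rfl, h3⟩
        have : y = 0 := by omega
        subst this
        simp at h0
      · intro p hp hx hy
        rw [dvd_neg] at hy
        refine aux_cop _ _ hg p hp ?_ hy
        have : 7 * (y + 2 * s) = 7 * y + 2 * (7 * s) := by ring
        rw [this]
        exact dvd_add (Dvd.dvd.mul_left hy _) (Dvd.dvd.mul_left hx _)
  · obtain ⟨t, ht⟩ : (7 : ℤ) ∣ x + y := by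
      apply h7.dvd_of_dvd_pow (n := 3)
      exact ⟨z ^ n + x ^ 2 * y, by linear_combination h⟩
    obtain rfl : x = 7 * t - y := by linear_combination ht
    obtain ⟨a, b, c, hc, he, h1, h2⟩ := aux_core2 n hn t y z (by
      apply mul_left_cancel₀ (by norm_num : (7 : ℤ) ≠ 0)
      linear_combination h)
    refine ⟨a, b, c, hc, he, fun h0 => h1 ?_, fun hg hn4 => h2 ?_⟩
    · rintro ⟨rfl, rfl⟩
      simp at h0
    · intro p hp hx hy
      exact aux_cop _ _ hg p hp (dvd_sub hx hy) hy
end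

section
/- Let A and B be finite groups and let G be a subgroup of A × B. Let π_A : A × B → A and π_B : A × B → B denote the two projection homomorphisms. Then the index [A × B : G] divides [A : π_A(G)] · [B : π_B(G)] · gcd(|π_A(G)|, |π_B(G)|). -/
/-- For a subgroup `G` of a product of finite groups `A × B`, the index of `G` divides
`[A : π_A(G)] · [B : π_B(G)] · gcd(|π_A(G)|, |π_B(G)|)`. -/
theorem index_subgroup_product (A B : Type*) [Group A] [Group B] [Finite A] [Finite B]
    (G : Subgroup (A × B)) :
    G.index ∣ (G.map (MonoidHom.fst A B)).index * (G.map (MonoidHom.snd A B)).index *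
      Nat.gcd (Nat.card (G.map (MonoidHom.fst A B))) (Nat.card (G.map (MonoidHom.snd A B))) := by
  have h := G.card_mul_index
  rw [Nat.card_prod, ← (G.map (MonoidHom.fst A B)).card_mul_index,
    ← (G.map (MonoidHom.snd A B)).card_mul_index] at h
  obtain ⟨k, hk⟩ := Subgroup.card_map_dvd G (MonoidHom.fst A B)
  obtain ⟨l, hl⟩ := Subgroup.card_map_dvd G (MonoidHom.snd A B)
  have ha : 0 < Nat.card (G.map (MonoidHom.fst A B)) := Nat.card_pos
  have hb : 0 < Nat.card (G.map (MonoidHom.snd A B)) := Nat.card_pos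
  rw [← Nat.gcd_mul_left]
  apply Nat.dvd_gcd
  · refine ⟨l, Nat.eq_of_mul_eq_mul_left hb ?_⟩
    rw [hl] at h
    linarith
  · refine ⟨k, Nat.eq_of_mul_eq_mul_left ha ?_⟩
    rw [hk] at h
    linarith
end

section
/- For every nonzero rational number t, the 2-adic valuation of the rational number (t² + 245t + 2401)³ · (t² + 13t + 49) / t⁷ is at most 0. -/
/-- The `2`-adic valuation of `j_B(t) = (t² + 245t + 2401)³(t² + 13t + 49)/t⁷` is
at most `0` for every nonzero rational `t`. -/
theorem two_adic_valuation_jB (t : ℚ) (ht : t ≠ 0) :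
    padicValRat 2 ((t ^ 2 + 245 * t + 2401) ^ 3 * (t ^ 2 + 13 * t + 49) / t ^ 7) ≤ 0 := by
  obtain ⟨a, b, hb, hcop, rfl⟩ : ∃ a b : ℤ, b ≠ 0 ∧ (¬ (Even a ∧ Even b)) ∧ t = (a : ℚ) / b := by
    refine ⟨t.num, t.den, by exact_mod_cast t.den_nz, ?_, (Rat.num_div_den t).symm⟩
    rintro ⟨h1, h2⟩
    have h3 : (2 : ℕ) ∣ t.num.natAbs := Int.natCast_dvd.mp (by exact_mod_cast h1.two_dvd)
    have h4 : (2 : ℕ) ∣ t.den := by exact_mod_cast h2.two_dvd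
    have h5 := Nat.dvd_gcd h3 h4
    rw [t.reduced] at h5
    omega
  have hbq : (b : ℚ) ≠ 0 := by exact_mod_cast hb
  have ha : a ≠ 0 := by
    rintro rfl
    simp at ht
  have haq : (a : ℚ) ≠ 0 := by exact_mod_cast ha
  have hodd : Odd ((a ^ 2 + 245 * a * b + 2401 * b ^ 2) ^ 3 * (a ^ 2 + 13 * a * b + 49 * b ^ 2)) := by
    have e1 : ¬ Even (245 : ℤ) := by decide
    have e2 : ¬ Even (2401 : ℤ) := by decide
    have e3 : ¬ Even (13 : ℤ) := by decide
    have e4 : ¬ Even (49 : ℤ) := by decide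
    rw [← Int.not_even_iff_odd]
    simp only [Int.even_mul, Int.even_add, Int.even_pow, e1, e2, e3, e4]
    tauto
  generalize hN : (a ^ 2 + 245 * a * b + 2401 * b ^ 2) ^ 3 * (a ^ 2 + 13 * a * b + 49 * b ^ 2) = N at hodd
  have key : (((a : ℚ) / b) ^ 2 + 245 * ((a : ℚ) / b) + 2401) ^ 3 *
      (((a : ℚ) / b) ^ 2 + 13 * ((a : ℚ) / b) + 49) / ((a : ℚ) / b) ^ 7
      = (N : ℚ) / ((a ^ 7 * b : ℤ) : ℚ) := by
    rw [← hN]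
    push_cast
    field_simp
  have hN0 : N ≠ 0 := by
    rintro rfl
    simp at hodd
  haveI : Fact (Nat.Prime 2) := ⟨Nat.prime_two⟩
  have hD : ((a ^ 7 * b : ℤ) : ℚ) ≠ 0 := by
    exact_mod_cast mul_ne_zero (pow_ne_zero 7 ha) hb
  rw [key, padicValRat.div (by exact_mod_cast hN0) hD, padicValRat.of_int, padicValRat.of_int,
    padicValInt.eq_zero_of_not_dvd]
  · simp
  · intro h
    rw [← Int.not_even_iff_odd] at hodd
    exact hodd (even_iff_two_dvd.mpr (by exact_mod_cast h))
end

section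
/- Let a, b, c be integers with c ≠ 0. (1) If a² + 28b³ = 27c⁷, then the Weierstrass curve E : y² = x³ + 189b·x + 189a over ℚ has discriminant Δ = −2⁴·3¹²·7²·c⁷ ≠ 0 and j-invariant c₄³/Δ = 2⁸·7·b³/c⁷. (2) If a² + 196b³ = 27c⁷, then the Weierstrass curve F : y² = x³ + 1323b·x + 1323a over ℚ has discriminant Δ = −2⁴·3¹²·7⁴·c⁷ ≠ 0 and j-invariant c₄³/Δ = 2⁸·7²·b³/c⁷. -/
/-- Discriminants and `j`-invariants of the elliptic curves `E_{(a,b,c)}` and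
`F_{(a,b,c)}` attached to solutions of the generalised Fermat equations
`a² + 28b³ = 27c⁷` and `a² + 196b³ = 27c⁷`. -/
theorem disc_j_Eabc_Fabc (a b c : ℤ) (hc : c ≠ 0) :
    (a ^ 2 + 28 * b ^ 3 = 27 * c ^ 7 →
      (⟨0, 0, 0, 189 * (b : ℚ), 189 * (a : ℚ)⟩ : WeierstrassCurve ℚ).Δ
          = -2 ^ 4 * 3 ^ 12 * 7 ^ 2 * (c : ℚ) ^ 7 ∧
      (⟨0, 0, 0, 189 * (b : ℚ), 189 * (a : ℚ)⟩ : WeierstrassCurve ℚ).Δ ≠ 0 ∧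
      (⟨0, 0, 0, 189 * (b : ℚ), 189 * (a : ℚ)⟩ : WeierstrassCurve ℚ).c₄ ^ 3 /
          (⟨0, 0, 0, 189 * (b : ℚ), 189 * (a : ℚ)⟩ : WeierstrassCurve ℚ).Δ
        = 2 ^ 8 * 7 * (b : ℚ) ^ 3 / (c : ℚ) ^ 7) ∧
    (a ^ 2 + 196 * b ^ 3 = 27 * c ^ 7 →
      (⟨0, 0, 0, 1323 * (b : ℚ), 1323 * (a : ℚ)⟩ : WeierstrassCurve ℚ).Δ
          = -2 ^ 4 * 3 ^ 12 * 7 ^ 4 * (c : ℚ) ^ 7 ∧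
      (⟨0, 0, 0, 1323 * (b : ℚ), 1323 * (a : ℚ)⟩ : WeierstrassCurve ℚ).Δ ≠ 0 ∧
      (⟨0, 0, 0, 1323 * (b : ℚ), 1323 * (a : ℚ)⟩ : WeierstrassCurve ℚ).c₄ ^ 3 /
          (⟨0, 0, 0, 1323 * (b : ℚ), 1323 * (a : ℚ)⟩ : WeierstrassCurve ℚ).Δ
        = 2 ^ 8 * 7 ^ 2 * (b : ℚ) ^ 3 / (c : ℚ) ^ 7) := by
  have hcq : (c : ℚ) ≠ 0 := by exact_mod_cast hc
  constructor
  · intro h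
    have hq : (a : ℚ) ^ 2 + 28 * (b : ℚ) ^ 3 = 27 * (c : ℚ) ^ 7 := by exact_mod_cast h
    have hD : (⟨0, 0, 0, 189 * (b : ℚ), 189 * (a : ℚ)⟩ : WeierstrassCurve ℚ).Δ
        = -2 ^ 4 * 3 ^ 12 * 7 ^ 2 * (c : ℚ) ^ 7 := by
      simp only [WeierstrassCurve.Δ, WeierstrassCurve.b₂, WeierstrassCurve.b₄,
        WeierstrassCurve.b₆, WeierstrassCurve.b₈]
      linear_combination (-16 * 189 ^ 2 * 27) * hq
    refine ⟨hD, ?_, ?_⟩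
    · rw [hD]
      exact mul_ne_zero (by norm_num) (pow_ne_zero 7 hcq)
    · rw [hD]
      simp only [WeierstrassCurve.c₄, WeierstrassCurve.b₂, WeierstrassCurve.b₄]
      rw [div_eq_div_iff (mul_ne_zero (by norm_num) (pow_ne_zero 7 hcq)) (pow_ne_zero 7 hcq)]
      ring
  · intro h
    have hq : (a : ℚ) ^ 2 + 196 * (b : ℚ) ^ 3 = 27 * (c : ℚ) ^ 7 := by exact_mod_cast h
    have hD : (⟨0, 0, 0, 1323 * (b : ℚ), 1323 * (a : ℚ)⟩ : WeierstrassCurve ℚ).Δ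
        = -2 ^ 4 * 3 ^ 12 * 7 ^ 4 * (c : ℚ) ^ 7 := by
      simp only [WeierstrassCurve.Δ, WeierstrassCurve.b₂, WeierstrassCurve.b₄,
        WeierstrassCurve.b₆, WeierstrassCurve.b₈]
      linear_combination (-16 * 1323 ^ 2 * 27) * hq
    refine ⟨hD, ?_, ?_⟩
    · rw [hD]
      exact mul_ne_zero (by norm_num) (pow_ne_zero 7 hcq)
    · rw [hD]
      simp only [WeierstrassCurve.c₄, WeierstrassCurve.b₂, WeierstrassCurve.b₄]
      rw [div_eq_div_iff (mul_ne_zero (by norm_num) (pow_ne_zero 7 hcq)) (pow_ne_zero 7 hcq)]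
      ring
end

section
/- Let a, b, c be integers with a² + 28b³ = 27c⁷, gcd(c, 42ab) = 1, and either 3 ∤ a or 27 ∣ a. (1) If 27 ∣ a, then 3 ∣ b, and the Weierstrass curve y² = x³ + (7b/3)·x + (7a/27) has integer coefficients and discriminant Δ = −2⁴·7²·c⁷. (2) If 3 ∤ a, let a₀ = 1 if a ≡ 1 (mod 3) and a₀ = −1 if a ≡ 2 (mod 3); then 3 divides 1 + 7b, 27 divides 7a − a₀ − 21a₀b, and the Weierstrass curve y² = x³ − a₀·x² + ((1 + 7b)/3)·x + ((7a − a₀ − 21a₀b)/27) has integer coefficients and discriminant Δ = −2⁴·7²·c⁷. In both cases the discriminant is coprime to 3. -/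
/-- Integral models with good reduction at `3` of the quadratic twist by `−3` of
`y² = x³ + 21bx − 7a`, for a (⋆)-solution `(a,b,c)` of `a² + 28b³ = 27c⁷`. -/
theorem twist_good_reduction_28 (a b c : ℤ)
    (heq : a ^ 2 + 28 * b ^ 3 = 27 * c ^ 7)
    (hgcd : Int.gcd c (42 * a * b) = 1)
    (h3 : ¬ (3 : ℤ) ∣ a ∨ (27 : ℤ) ∣ a) :
    ((27 : ℤ) ∣ a → (3 : ℤ) ∣ b ∧
      (⟨0, 0, 0, 7 * (b : ℚ) / 3, 7 * (a : ℚ) / 27⟩ : WeierstrassCurve ℚ).Δ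
        = -2 ^ 4 * 7 ^ 2 * (c : ℚ) ^ 7) ∧
    (¬ (3 : ℤ) ∣ a →
      ∀ a₀ : ℤ, a₀ = (if a % 3 = 1 then 1 else -1) →
        (3 : ℤ) ∣ (1 + 7 * b) ∧ (27 : ℤ) ∣ (7 * a - a₀ - 21 * a₀ * b) ∧
        (⟨0, -(a₀ : ℚ), 0, (1 + 7 * (b : ℚ)) / 3,
            (7 * (a : ℚ) - (a₀ : ℚ) - 21 * (a₀ : ℚ) * (b : ℚ)) / 27⟩ :
          WeierstrassCurve ℚ).Δ = -2 ^ 4 * 7 ^ 2 * (c : ℚ) ^ 7) ∧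
    IsCoprime (-2 ^ 4 * 7 ^ 2 * c ^ 7 : ℤ) 3 := by
  have heqQ : (a : ℚ) ^ 2 + 28 * (b : ℚ) ^ 3 = 27 * (c : ℚ) ^ 7 := by exact_mod_cast heq
  refine ⟨?_, ?_, ?_⟩
  · intro ha
    refine ⟨?_, ?_⟩
    · obtain ⟨k, rfl⟩ := ha
      have h : (3 : ℤ) ∣ b ^ 3 := by
        have : b ^ 3 = 3 * (9 * c ^ 7 - 243 * k ^ 2 - 9 * b ^ 3) := by linarith
        exact ⟨_, this⟩
      exact Int.prime_three.dvd_of_dvd_pow h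
    · simp only [WeierstrassCurve.Δ, WeierstrassCurve.b₂, WeierstrassCurve.b₄,
        WeierstrassCurve.b₆, WeierstrassCurve.b₈]
      linear_combination (-(16 * 49 / 27 : ℚ)) * heqQ
  · intro ha a₀ h0
    have hsq : a₀ ^ 2 = 1 := by
      rw [h0]; split_ifs <;> norm_num
    have hm : ∃ m, a = a₀ * (3 * m + 1) := by
      rw [h0]
      split_ifs with h
      · exact ⟨a / 3, by omega⟩
      · exact ⟨-(a + 1) / 3, by omega⟩
    obtain ⟨m, hm⟩ := hm
    have ha2 : a ^ 2 = (3 * m + 1) ^ 2 := by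
      rw [hm, mul_pow, hsq, one_mul]
    have hk : ∃ k, b = 3 * k - 1 := by
      have hb : b = 3 * (b / 3) + b % 3 := by omega
      have h1 : b % 3 = 0 ∨ b % 3 = 1 ∨ b % 3 = 2 := by omega
      generalize b / 3 = q at hb
      rcases h1 with h | h | h <;> rw [h] at hb <;> subst hb
      · ring_nf at heq ha2; omega
      · ring_nf at heq ha2; omega
      · exact ⟨q + 1, by ring⟩
    obtain ⟨k, rfl⟩ := hk
    have hn : ∃ n, m = 3 * n := by
      have h : (3 : ℤ) ∣ m := by
        ring_nf at heq ha2; omega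
      exact h
    obtain ⟨n, rfl⟩ := hn
    have hnk : (3 : ℤ) ∣ n - k := by
      ring_nf at heq ha2; omega
    obtain ⟨t, ht⟩ := hnk
    refine ⟨⟨7 * k - 2, by ring⟩, ⟨a₀ * (1 + 7 * t), ?_⟩, ?_⟩
    · rw [hm]; linear_combination 63 * a₀ * ht
    · have hsqQ : (a₀ : ℚ) ^ 2 = 1 := by exact_mod_cast hsq
      have h01 : (a₀ : ℚ) = 1 ∨ (a₀ : ℚ) = -1 := by simpa using hsqQ
      simp only [WeierstrassCurve.Δ, WeierstrassCurve.b₂, WeierstrassCurve.b₄,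
        WeierstrassCurve.b₆, WeierstrassCurve.b₈]
      rcases h01 with h | h <;> rw [h] <;>
        linear_combination (-(16 * 49 / 27 : ℚ)) * heqQ
  · have hc : IsCoprime c 3 := by
      have h := Int.isCoprime_iff_gcd_eq_one.mpr hgcd
      exact h.of_isCoprime_of_dvd_right ⟨14 * a * b, by ring⟩
    have h2 : IsCoprime (-2 ^ 4 * 7 ^ 2 : ℤ) 3 := by
      rw [Int.isCoprime_iff_gcd_eq_one]; decide
    exact h2.mul_left hc.pow_left
end

section
/- Let a, b, c be integers with a² + 196b³ = 27c⁷, gcd(c, 42ab) = 1, and either 3 ∤ a or 27 ∣ a. (1) If 27 ∣ a, then 3 ∣ b, and the Weierstrass curve y² = x³ + (49b/3)·x + (49a/27) has integer coefficients and discriminant Δ = −2⁴·7⁴·c⁷. (2) If 3 ∤ a, let a₀ = 1 if a ≡ 1 (mod 3) and a₀ = −1 if a ≡ 2 (mod 3); then 3 divides 1 + 49b, 27 divides 49a − a₀ − 147a₀b, and the Weierstrass curve y² = x³ − a₀·x² + ((1 + 49b)/3)·x + ((49a − a₀ − 147a₀b)/27) has integer coefficients and discriminant Δ = −2⁴·7⁴·c⁷.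 In both cases the discriminant is coprime to 3. -/
set_option maxRecDepth 100000 in
theorem aux_zmod27 : ∀ x y : ZMod 27, x ^ 2 + 196 * y ^ 3 = 0 →
    (9 * x = 9 → 49 * x - 1 - 147 * y = 0 ∧ 9 * (1 + 49 * y) = 0) ∧
    (9 * x = -9 → 49 * x + 1 + 147 * y = 0 ∧ 9 * (1 + 49 * y) = 0) := by
  decide

/-- Integral models with good reduction at `3` of the quadratic twist by `−3` of
`y² = x³ + 147bx − 49a`, for a (⋆)-solution `(a,b,c)` of `a² + 196b³ = 27c⁷`. -/
theorem twist_good_reduction_196 (a b c : ℤ)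
    (heq : a ^ 2 + 196 * b ^ 3 = 27 * c ^ 7)
    (hgcd : Int.gcd c (42 * a * b) = 1)
    (h3 : ¬ (3 : ℤ) ∣ a ∨ (27 : ℤ) ∣ a) :
    ((27 : ℤ) ∣ a → (3 : ℤ) ∣ b ∧
      (⟨0, 0, 0, 49 * (b : ℚ) / 3, 49 * (a : ℚ) / 27⟩ : WeierstrassCurve ℚ).Δ
        = -2 ^ 4 * 7 ^ 4 * (c : ℚ) ^ 7) ∧
    (¬ (3 : ℤ) ∣ a →
      ∀ a₀ : ℤ, a₀ = (if a % 3 = 1 then 1 else -1) →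
        (3 : ℤ) ∣ (1 + 49 * b) ∧ (27 : ℤ) ∣ (49 * a - a₀ - 147 * a₀ * b) ∧
        (⟨0, -(a₀ : ℚ), 0, (1 + 49 * (b : ℚ)) / 3,
            (49 * (a : ℚ) - (a₀ : ℚ) - 147 * (a₀ : ℚ) * (b : ℚ)) / 27⟩ :
          WeierstrassCurve ℚ).Δ = -2 ^ 4 * 7 ^ 4 * (c : ℚ) ^ 7) ∧
    IsCoprime (-2 ^ 4 * 7 ^ 4 * c ^ 7 : ℤ) 3 := by
  have hz : ((a : ZMod 27)) ^ 2 + 196 * (b : ZMod 27) ^ 3 = 0 := by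
    have h := congrArg (Int.cast : ℤ → ZMod 27) heq
    push_cast at h
    rw [h, show (27 : ZMod 27) = 0 from rfl, zero_mul]
  have hq : (a : ℚ) ^ 2 + 196 * (b : ℚ) ^ 3 = 27 * (c : ℚ) ^ 7 := by exact_mod_cast heq
  refine ⟨fun h27 => ⟨?_, ?_⟩, ?_, ?_⟩
  · obtain ⟨k, rfl⟩ := h27
    have h1 : (3 : ℤ) ∣ 196 * b ^ 3 := ⟨9 * c ^ 7 - 243 * k ^ 2, by linarith⟩
    have h2 : (3 : ℤ) ∣ b ^ 3 := by omega
    exact Int.prime_three.dvd_of_dvd_pow h2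
  · simp only [WeierstrassCurve.Δ, WeierstrassCurve.b₂, WeierstrassCurve.b₄,
      WeierstrassCurve.b₆, WeierstrassCurve.b₈]
    linear_combination (-16 * 49 ^ 2 / 27 : ℚ) * hq
  · intro hna a₀ ha₀
    have key : (3 : ℤ) ∣ (1 + 49 * b) ∧ (27 : ℤ) ∣ (49 * a - a₀ - 147 * a₀ * b) ∧
        a₀ ^ 2 = 1 := by
      have tr : ∀ z : ℤ, (z : ZMod 27) = 0 → (27 : ℤ) ∣ z := fun z hz =>
        (ZMod.intCast_zmod_eq_zero_iff_dvd z 27).1 hz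
      have tr' : ∀ z : ℤ, (27 : ℤ) ∣ z → (z : ZMod 27) = 0 := fun z hz =>
        (ZMod.intCast_zmod_eq_zero_iff_dvd z 27).2 hz
      obtain ⟨hA, hB⟩ := aux_zmod27 _ _ hz
      by_cases h1 : a % 3 = 1
      · rw [if_pos h1] at ha₀
        subst ha₀
        have h9 := tr' (9 * a - 9) (by omega)
        push_cast at h9
        obtain ⟨e1, e2⟩ := hA (sub_eq_zero.1 h9)
        have f1 := tr (49 * a - 1 - 147 * b) (by push_cast; exact e1)
        have f2 := tr (9 * (1 + 49 * b)) (by push_cast; exact e2)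
        refine ⟨by omega, by omega, by norm_num⟩
      · rw [if_neg h1] at ha₀
        subst ha₀
        have h9 := tr' (9 * a + 9) (by omega)
        push_cast at h9
        obtain ⟨e1, e2⟩ := hB (eq_neg_of_add_eq_zero_left h9)
        have f1 := tr (49 * a + 1 + 147 * b) (by push_cast; exact e1)
        have f2 := tr (9 * (1 + 49 * b)) (by push_cast; exact e2)
        refine ⟨by omega, by omega, by norm_num⟩
    obtain ⟨k1, k2, _⟩ := key
    refine ⟨k1, k2, ?_⟩
    have hs : a₀ = 1 ∨ a₀ = -1 := by
      split_ifs at ha₀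
      · exact Or.inl ha₀
      · exact Or.inr ha₀
    simp only [WeierstrassCurve.Δ, WeierstrassCurve.b₂, WeierstrassCurve.b₄,
      WeierstrassCurve.b₆, WeierstrassCurve.b₈]
    rcases hs with h | h <;> rw [h] <;> push_cast <;>
      linear_combination (-16 * 49 ^ 2 / 27 : ℚ) * hq
  · have hc : IsCoprime c 3 :=
      (Int.isCoprime_iff_gcd_eq_one.2 hgcd).of_isCoprime_of_dvd_right
        ⟨14 * a * b, by ring⟩
    have h2 : IsCoprime (-2 ^ 4 * 7 ^ 4 : ℤ) 3 := by
      rw [Int.isCoprime_iff_gcd_eq_one]; decide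
    exact h2.mul_left hc.pow_left
end

section
/- Let x and y be coprime integers. Then: (1) 49 does not divide x³ − 7x²y + 7xy² + 7y³; (2) 16 does not divide x³ − 7x²y + 7xy² + 7y³; (3) 49 does not divide x³ − 4x²y + 3xy² + y³. -/
lemma sixteen_aux : ∀ a b : ZMod 16, a ^ 3 - 7 * a ^ 2 * b + 7 * a * b ^ 2 + 7 * b ^ 3 = 0 →
    8 * a = 0 ∧ 8 * b = 0 := by
  decide

lemma not_both (p : ℤ) (hp : ¬ p ∣ 1) (x y : ℤ) (hxy : Int.gcd x y = 1)
    (hx : p ∣ x) (hy : p ∣ y) : False := by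
  have h := Int.dvd_coe_gcd hx hy
  rw [hxy] at h
  exact hp (by exact_mod_cast h)

/-- Non-divisibility of the cubic forms `x³ − 7x²y + 7xy² + 7y³` (by `49` and `16`)
and `x³ − 4x²y + 3xy² + y³` (by `49`) at coprime arguments. -/
theorem cubic_forms_nondivisibility (x y : ℤ) (hxy : Int.gcd x y = 1) :
    ¬ (49 : ℤ) ∣ (x ^ 3 - 7 * x ^ 2 * y + 7 * x * y ^ 2 + 7 * y ^ 3) ∧
    ¬ (16 : ℤ) ∣ (x ^ 3 - 7 * x ^ 2 * y + 7 * x * y ^ 2 + 7 * y ^ 3) ∧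
    ¬ (49 : ℤ) ∣ (x ^ 3 - 4 * x ^ 2 * y + 3 * x * y ^ 2 + y ^ 3) := by
  have h7 : Prime (7 : ℤ) := by norm_num
  refine ⟨?_, ?_, ?_⟩
  · rintro ⟨c, hc⟩
    have hx : (7 : ℤ) ∣ x := h7.dvd_of_dvd_pow (n := 3)
      ⟨7 * c + x ^ 2 * y - x * y ^ 2 - y ^ 3, by linear_combination hc⟩
    refine not_both 7 (by norm_num) x y hxy hx ?_
    obtain ⟨k, rfl⟩ := hx
    exact h7.dvd_of_dvd_pow (n := 3)
      ⟨c - 7 * k ^ 3 + 7 * k ^ 2 * y - k * y ^ 2, by linarith⟩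
  · intro h
    have h0 := (ZMod.intCast_zmod_eq_zero_iff_dvd _ 16).2 (by exact_mod_cast h)
    push_cast at h0
    obtain ⟨ha, hb⟩ := sixteen_aux _ _ h0
    have ha' := (ZMod.intCast_zmod_eq_zero_iff_dvd (8 * x) 16).1 (by push_cast; exact ha)
    have hb' := (ZMod.intCast_zmod_eq_zero_iff_dvd (8 * y) 16).1 (by push_cast; exact hb)
    push_cast at ha' hb'
    exact not_both 2 (by norm_num) x y hxy (by omega) (by omega)
  · rintro ⟨c, hc⟩
    have hx : (7 : ℤ) ∣ x + y := h7.dvd_of_dvd_pow (n := 3)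
      ⟨7 * c + x ^ 2 * y, by linear_combination hc⟩
    obtain ⟨k, hk⟩ := hx
    obtain rfl : x = 7 * k - y := by linarith
    have hy : (7 : ℤ) ∣ y := h7.dvd_of_dvd_pow (n := 3)
      ⟨- c + 7 * k ^ 3 - 7 * k ^ 2 * y + 2 * k * y ^ 2, by linarith⟩
    exact not_both 7 (by norm_num) _ y hxy (by omega) hy
end

section
/- Let x and y be coprime integers. Then the greatest common divisor of x³ − 7x²y + 7xy² + 7y³ and 4x(x² + 7y²)(x² − 7xy + 14y²)(5x² − 14xy − 7y²) divides 56. -/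
lemma jns_not16 (x y : ZMod 16) (h : x ^ 3 - 7 * x ^ 2 * y + 7 * x * y ^ 2 + 7 * y ^ 3 = 0) :
    8 * x = 0 ∧ 8 * y = 0 := by
  revert x y; decide +kernel

lemma jns_not49 (x y : ZMod 49) (h : x ^ 3 - 7 * x ^ 2 * y + 7 * x * y ^ 2 + 7 * y ^ 3 = 0) :
    7 * x = 0 ∧ 7 * y = 0 := by
  revert x y; decide +kernel

/-- For coprime integers `x, y`, the gcd of the denominator and numerator forms of the
`j`-map of `X_{ns}⁺(7)` divides `56`. -/
theorem gcd_jns_forms (x y : ℤ) (hxy : Int.gcd x y = 1) :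
    (Int.gcd (x ^ 3 - 7 * x ^ 2 * y + 7 * x * y ^ 2 + 7 * y ^ 3)
      (4 * x * (x ^ 2 + 7 * y ^ 2) * (x ^ 2 - 7 * x * y + 14 * y ^ 2) *
        (5 * x ^ 2 - 14 * x * y - 7 * y ^ 2)) : ℤ) ∣ 56 := by
  have hc : IsCoprime x y := Int.isCoprime_iff_gcd_eq_one.mpr hxy
  have hf := Int.gcd_dvd_left (x ^ 3 - 7 * x ^ 2 * y + 7 * x * y ^ 2 + 7 * y ^ 3)
      (4 * x * (x ^ 2 + 7 * y ^ 2) * (x ^ 2 - 7 * x * y + 14 * y ^ 2) *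
        (5 * x ^ 2 - 14 * x * y - 7 * y ^ 2))
  have hg := Int.gcd_dvd_right (x ^ 3 - 7 * x ^ 2 * y + 7 * x * y ^ 2 + 7 * y ^ 3)
      (4 * x * (x ^ 2 + 7 * y ^ 2) * (x ^ 2 - 7 * x * y + 14 * y ^ 2) *
        (5 * x ^ 2 - 14 * x * y - 7 * y ^ 2))
  generalize Int.gcd (x ^ 3 - 7 * x ^ 2 * y + 7 * x * y ^ 2 + 7 * y ^ 3)
      (4 * x * (x ^ 2 + 7 * y ^ 2) * (x ^ 2 - 7 * x * y + 14 * y ^ 2) *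
        (5 * x ^ 2 - 14 * x * y - 7 * y ^ 2)) = d at hf hg ⊢
  -- `d` is prime to `y`
  have hfy : IsCoprime (x ^ 3 - 7 * x ^ 2 * y + 7 * x * y ^ 2 + 7 * y ^ 3) y := by
    have h3 : IsCoprime (x ^ 3) y := hc.pow_left
    have := h3.add_mul_left_left (-7 * x ^ 2 + 7 * x * y + 7 * y ^ 2)
    have heq : x ^ 3 - 7 * x ^ 2 * y + 7 * x * y ^ 2 + 7 * y ^ 3
        = x ^ 3 + y * (-7 * x ^ 2 + 7 * x * y + 7 * y ^ 2) := by ring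
    rw [heq]
    exact this
  have hdy : IsCoprime (d : ℤ) y := hfy.of_isCoprime_of_dvd_left hf
  -- the four factors modulo `d`
  have e1 : x * (-7 * y ^ 2 + 7 * x * y - x ^ 2) ≡ 7 * y ^ 3 [ZMOD d] := by
    refine (Int.modEq_iff_dvd.2 ((hf.mul_left 1).trans (dvd_of_eq ?_)))
    ring
  have e2 : (x ^ 2 + 7 * y ^ 2) * (7 * y - x) ≡ 56 * y ^ 3 [ZMOD d] := by
    refine (Int.modEq_iff_dvd.2 ((hf.mul_left 1).trans (dvd_of_eq ?_)))
    ring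
  have e3 : (x ^ 2 - 7 * x * y + 14 * y ^ 2) * (7 * y ^ 2 + 6 * x * y - x ^ 2)
      ≡ 56 * y ^ 4 [ZMOD d] := by
    refine (Int.modEq_iff_dvd.2 ((hf.mul_left (x - 6 * y)).trans (dvd_of_eq ?_)))
    ring
  have e4 : (5 * x ^ 2 - 14 * x * y - 7 * y ^ 2) * (21 * y ^ 2 - 20 * x * y + 3 * x ^ 2)
      ≡ 112 * y ^ 4 [ZMOD d] := by
    refine (Int.modEq_iff_dvd.2 ((hf.mul_left (37 * y - 15 * x)).trans (dvd_of_eq ?_)))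
    ring
  have e := (((e1.mul e2).mul e3).mul e4).mul_left 4
  have h1 : (d : ℤ) ∣ (2 ^ 12 * 7 ^ 5) * y ^ 14 := by
    have h0 := (hg.mul_right ((-7 * y ^ 2 + 7 * x * y - x ^ 2) * (7 * y - x) *
      (7 * y ^ 2 + 6 * x * y - x ^ 2) * (21 * y ^ 2 - 20 * x * y + 3 * x ^ 2)))
    have := (dvd_add h0 (Int.modEq_iff_dvd.1 e)).mul_left 7
    refine this.trans (dvd_of_eq ?_)
    ring
  have h2 : (d : ℤ) ∣ 2 ^ 12 * 7 ^ 5 := (hdy.pow_right).dvd_of_dvd_mul_right h1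
  have h3 : d ∣ 2 ^ 12 * 7 ^ 5 := by exact_mod_cast h2
  obtain ⟨u, v, hu, hv, rfl⟩ := (Nat.dvd_mul).1 h3
  obtain ⟨a, -, rfl⟩ := (Nat.dvd_prime_pow Nat.prime_two).1 hu
  obtain ⟨b, -, rfl⟩ := (Nat.dvd_prime_pow (by norm_num : Nat.Prime 7)).1 hv
  obtain ⟨s, t, hst⟩ := hc
  have ha : a ≤ 3 := by
    by_contra hcon
    have h16 : (16 : ℤ) ∣ _ := (by
      push_cast
      exact ((pow_dvd_pow (2 : ℤ) (by omega : 4 ≤ a)).mul_right _ :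
        (2 : ℤ) ^ 4 ∣ 2 ^ a * 7 ^ b) : (16 : ℤ) ∣ ((2 ^ a * 7 ^ b : ℕ) : ℤ)).trans hf
    have hz := (ZMod.intCast_zmod_eq_zero_iff_dvd _ 16).2 h16
    push_cast at hz
    obtain ⟨hx, hy⟩ := jns_not16 _ _ hz
    have hs : (s : ZMod 16) * x + t * y = 1 := by exact_mod_cast congrArg (Int.cast) hst
    have : (8 : ZMod 16) = 0 := by linear_combination (-8) * hs + s * hx + t * hy
    exact absurd this (by decide)
  have hb : b ≤ 1 := by
    by_contra hcon
    have h49 : (49 : ℤ) ∣ _ := (by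
      push_cast
      exact ((pow_dvd_pow (7 : ℤ) (by omega : 2 ≤ b)).mul_left _ :
        (7 : ℤ) ^ 2 ∣ 2 ^ a * 7 ^ b) : (49 : ℤ) ∣ ((2 ^ a * 7 ^ b : ℕ) : ℤ)).trans hf
    have hz := (ZMod.intCast_zmod_eq_zero_iff_dvd _ 49).2 h49
    push_cast at hz
    obtain ⟨hx, hy⟩ := jns_not49 _ _ hz
    have hs : (s : ZMod 49) * x + t * y = 1 := by exact_mod_cast congrArg (Int.cast) hst
    have : (7 : ZMod 49) = 0 := by linear_combination (-7) * hs + s * hx + t * hy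
    exact absurd this (by decide)
  have : 2 ^ a * 7 ^ b ∣ 2 ^ 3 * 7 ^ 1 := mul_dvd_mul (pow_dvd_pow 2 ha) (pow_dvd_pow 7 hb)
  exact_mod_cast this
end

section
/- Assume the abc conjecture in the following form: for every real ε > 0 there exists a real constant K > 0 such that for all coprime positive integers A and B, one has A + B ≤ K · rad(A·B·(A+B))^(1+ε), where rad(m) denotes the product of the distinct prime factors of m. Then there exists a natural number N such that for every prime p > N, every k ∈ {1, 7, 8, 56}, and all integers x, y, z with gcd(x, y) = 1 and x³ − 7x²y + 7xy² + 7y³ = k·z^p, one has z = 1 or z = −1. -/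
lemma core_bound
    (habc : ∀ ε : ℝ, 0 < ε → ∃ K : ℝ, 0 < K ∧ ∀ A B : ℕ, 0 < A → 0 < B →
      Nat.Coprime A B →
      ((A + B : ℕ) : ℝ) ≤
        K * ((∏ q ∈ (A * B * (A + B)).primeFactors, q : ℕ) : ℝ) ^ ((1 : ℝ) + ε)) :
    ∃ M : ℕ, ∀ p k G F H Z : ℕ, 12 ≤ p → (k = 1 ∨ k = 7 ∨ k = 8 ∨ k = 56) →
      G ^ 2 + 27 * F ^ 2 = 28 * H ^ 3 → Nat.gcd F H ∣ 112 → F = k * Z ^ p → 0 < F →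
      F ^ 2 ≤ M := by
  obtain ⟨K, hK, habc⟩ := habc (1 / 22) (by norm_num)
  obtain ⟨D, hD⟩ : ∃ D : ℕ, D = 756 * 112 ^ 3 := ⟨_, rfl⟩
  have hD0 : 0 < D := by rw [hD]; norm_num
  obtain ⟨C, hC⟩ : ∃ C : ℕ, C = 42 ^ 4 * 784 * 2 := ⟨_, rfl⟩
  obtain ⟨T, hT⟩ : ∃ T : ℕ, (D : ℝ) ^ 88 * K ^ 88 * (C : ℝ) ^ 23 ≤ T := exists_nat_ge _
  refine ⟨max D (2 * T ^ 3), ?_⟩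
  intro p k G F H Z hp hk hG hgcd hF hF0
  have hkpos : 0 < k := by omega
  have hH0 : 0 < H := by
    rcases Nat.eq_zero_or_pos H with h | h
    · subst h
      have : 0 < F ^ 2 := by positivity
      omega
    · exact h
  have hZ0 : 0 < Z := by
    rcases Nat.eq_zero_or_pos Z with h | h
    · subst h
      rw [zero_pow (by omega)] at hF
      omega
    · exact h
  obtain ⟨e, he⟩ : ∃ e, e = Nat.gcd (G ^ 2) (27 * F ^ 2) := ⟨_, rfl⟩
  have he1 : e ∣ G ^ 2 := he ▸ Nat.gcd_dvd_left _ _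
  have he2 : e ∣ 27 * F ^ 2 := he ▸ Nat.gcd_dvd_right _ _
  have he3 : e ∣ 28 * H ^ 3 := hG ▸ dvd_add he1 he2
  have heD : e ∣ D := by
    have h1 : e ∣ 756 * F ^ 3 :=
      he2.trans ⟨28 * F, by ring⟩
    have h2 : e ∣ 756 * H ^ 3 := he3.trans ⟨27, by ring⟩
    have h3 := Nat.dvd_gcd h1 h2
    rw [Nat.gcd_mul_left, Nat.pow_gcd_pow] at h3
    rw [hD]
    exact h3.trans (Nat.mul_dvd_mul_left _ (pow_dvd_pow_of_dvd hgcd 3))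
  have heD' : e ≤ D := Nat.le_of_dvd hD0 heD
  rcases Nat.eq_zero_or_pos G with hG0 | hG0
  · have : e = 27 * F ^ 2 := by rw [he, hG0]; simp
    exact le_trans (by omega) (le_max_left _ _)
  refine le_trans ?_ (le_max_right _ _)
  have hF2 : F ^ 2 ≤ 2 * H ^ 3 := by omega
  suffices hHT : H ≤ T from hF2.trans (by gcongr)
  have hG2 : G ^ 2 ≤ 28 * H ^ 3 := by omega
  have hZ4 : Z ^ 4 ≤ 2 * H := by
    have h1 : Z ^ 12 ≤ Z ^ p := Nat.pow_le_pow_right hZ0 hp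
    have h2 : Z ^ p ≤ F := by rw [hF]; exact Nat.le_mul_of_pos_left _ hkpos
    have h3 : F ≤ F ^ 2 := Nat.le_self_pow (by norm_num) F
    have h4 : (Z ^ 4) ^ 3 ≤ (2 * H) ^ 3 := by
      have : (Z ^ 4) ^ 3 = Z ^ 12 := by ring
      have : (2 * H) ^ 3 = 8 * H ^ 3 := by ring
      omega
    exact (Nat.pow_le_pow_iff_left (by norm_num)).1 h4
  obtain ⟨A, hA⟩ := he1
  obtain ⟨B, hB⟩ := he2
  have he0 : 0 < e := Nat.pos_of_dvd_of_pos heD hD0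
  have hA0 : 0 < A := by
    rcases Nat.eq_zero_or_pos A with h | h
    · subst h
      have : 0 < G ^ 2 := by positivity
      omega
    · exact h
  have hB0 : 0 < B := by
    rcases Nat.eq_zero_or_pos B with h | h
    · subst h
      have : 0 < F ^ 2 := by positivity
      omega
    · exact h
  have hAB : Nat.Coprime A B := by
    have h : e * Nat.gcd A B = e * 1 := by
      rw [← Nat.gcd_mul_left, ← hA, ← hB, ← he, mul_one]
    exact Nat.eq_of_mul_eq_mul_left he0 h
  have hABC : e * (A + B) = 28 * H ^ 3 := by rw [mul_add, ← hA, ← hB, hG]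
  have key := habc A B hA0 hB0 hAB
  set r := ∏ q ∈ (A * B * (A + B)).primeFactors, q with hr
  have hrle : r ≤ 42 * G * Z * H := by
    have hne : 42 * G * Z * H ≠ 0 := by positivity
    have hsub : (A * B * (A + B)).primeFactors ⊆ (42 * G * Z * H).primeFactors := by
      intro q hq
      have hqp := Nat.prime_of_mem_primeFactors hq
      have hqd := Nat.dvd_of_mem_primeFactors hq
      refine Nat.mem_primeFactors.2 ⟨hqp, ?_, hne⟩
      have h42 : q ∣ 42 → q ∣ 42 * G * Z * H := fun h =>
        h.trans ⟨G * Z * H, by ring⟩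
      have hk42 : q ∣ k → q ∣ 42 := by
        intro h
        rcases hk with rfl | rfl | rfl | rfl
        · exact h.trans (one_dvd _)
        · exact h.trans (by norm_num)
        · exact (hqp.dvd_of_dvd_pow (n := 3) (m := 2) (by simpa using h)).trans (by norm_num)
        · exact (hqp.dvd_of_dvd_pow (n := 3) (m := 14) (h.trans (by norm_num))).trans
            (by norm_num)
      rcases hqp.dvd_mul.1 hqd with h | h
      · rcases hqp.dvd_mul.1 h with h | h
        · have h1 : q ∣ G ^ 2 := by rw [hA]; exact h.mul_left _
          exact (hqp.dvd_of_dvd_pow h1).trans ⟨42 * Z * H, by ring⟩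
        · have h1 : q ∣ 27 * F ^ 2 := by rw [hB]; exact h.mul_left _
          rcases hqp.dvd_mul.1 h1 with h2 | h2
          · exact h42 ((hqp.dvd_of_dvd_pow (n := 3) (m := 3) (by simpa using h2)).trans
              (by norm_num))
          · have h3 := hqp.dvd_of_dvd_pow h2
            rw [hF] at h3
            rcases hqp.dvd_mul.1 h3 with h4 | h4
            · exact h42 (hk42 h4)
            · exact (hqp.dvd_of_dvd_pow h4).trans ⟨42 * G * H, by ring⟩
      · have h1 : q ∣ 28 * H ^ 3 := by rw [← hABC]; exact h.mul_left _
        rcases hqp.dvd_mul.1 h1 with h2 | h2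
        · exact h42 ((hqp.dvd_of_dvd_pow (n := 2) (m := 14) (h2.trans (by norm_num))).trans
              (by norm_num))
        · exact (hqp.dvd_of_dvd_pow h2).trans ⟨42 * G * Z, by ring⟩
    calc r ≤ ∏ q ∈ (42 * G * Z * H).primeFactors, q :=
          Finset.prod_le_prod_of_subset_of_one_le' hsub
            (fun q hq _ => (Nat.prime_of_mem_primeFactors hq).one_le)
      _ ≤ _ := Nat.le_of_dvd (Nat.pos_of_ne_zero hne) (Nat.prod_primeFactors_dvd _)
  have hr4 : r ^ 4 ≤ C * H ^ 11 := by
    calc r ^ 4 ≤ (42 * G * Z * H) ^ 4 := Nat.pow_le_pow_left hrle 4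
      _ = 42 ^ 4 * (G ^ 2) ^ 2 * Z ^ 4 * H ^ 4 := by ring
      _ ≤ 42 ^ 4 * (28 * H ^ 3) ^ 2 * (2 * H) * H ^ 4 := by gcongr
      _ = C * H ^ 11 := by rw [hC]; ring
  have hHle : (H : ℝ) ^ 3 ≤ D * (K * (r : ℝ) ^ ((1 : ℝ) + 1 / 22)) := by
    have h1 : H ^ 3 ≤ D * (A + B) := by
      calc H ^ 3 ≤ 28 * H ^ 3 := by omega
        _ = e * (A + B) := hABC.symm
        _ ≤ _ := by gcongr
    calc (H : ℝ) ^ 3 ≤ D * ((A + B : ℕ) : ℝ) := by exact_mod_cast h1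
      _ ≤ _ := by gcongr
  have hrp : ((r : ℝ) ^ ((1 : ℝ) + 1 / 22)) ^ 88 = ((r : ℝ) ^ 4) ^ 23 := by
    rw [← Real.rpow_natCast, ← Real.rpow_mul (Nat.cast_nonneg r), ← pow_mul,
      ← Real.rpow_natCast]
    norm_num
  have hbig : (H : ℝ) ^ 264 ≤ ((D : ℝ) ^ 88 * K ^ 88 * (C : ℝ) ^ 23) * (H : ℝ) ^ 253 := by
    calc (H : ℝ) ^ 264 = ((H : ℝ) ^ 3) ^ 88 := by rw [← pow_mul]
      _ ≤ (D * (K * (r : ℝ) ^ ((1 : ℝ) + 1 / 22))) ^ 88 := by gcongr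
      _ = (D : ℝ) ^ 88 * K ^ 88 * ((r : ℝ) ^ 4) ^ 23 := by
        rw [mul_pow, mul_pow, hrp, mul_assoc]
      _ ≤ (D : ℝ) ^ 88 * K ^ 88 * ((C : ℝ) * (H : ℝ) ^ 11) ^ 23 := by
        gcongr
        exact_mod_cast hr4
      _ = _ := by rw [mul_pow, ← pow_mul, ← mul_assoc]
  have hHpos : (0 : ℝ) < (H : ℝ) ^ 253 := by positivity
  have h11 : (H : ℝ) ^ 11 ≤ T := by
    refine le_trans (le_of_mul_le_mul_right ?_ hHpos) hT
    rw [← pow_add]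
    exact hbig
  have h11' : H ^ 11 ≤ T := by exact_mod_cast h11
  exact (Nat.le_self_pow (by norm_num) H).trans h11'

lemma gcd_dvd_112 (x y : ℤ) (h : Int.gcd x y = 1) :
    Int.gcd (x ^ 3 - 7 * x ^ 2 * y + 7 * x * y ^ 2 + 7 * y ^ 3)
      (x ^ 2 - 4 * x * y + 7 * y ^ 2) ∣ 112 := by
  set f := x ^ 3 - 7 * x ^ 2 * y + 7 * x * y ^ 2 + 7 * y ^ 3 with hf
  set g := x ^ 2 - 4 * x * y + 7 * y ^ 2 with hg
  have hxy : IsCoprime x y := Int.isCoprime_iff_gcd_eq_one.2 h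
  have hgy : IsCoprime g y := by
    have h1 : IsCoprime (x ^ 2 + y * (-4 * x + 7 * y)) y :=
      IsCoprime.add_mul_left_left (hxy.pow_left) _
    have h2 : x ^ 2 + y * (-4 * x + 7 * y) = g := by rw [hg]; ring
    rwa [h2] at h1
  have d1 : (Int.gcd f g : ℤ) ∣ f := Int.gcd_dvd_left ..
  have d2 : (Int.gcd f g : ℤ) ∣ g := Int.gcd_dvd_right ..
  have d3 : (Int.gcd f g : ℤ) ∣ 112 * y ^ 4 := by
    have : 112 * y ^ 4 = (36 * y ^ 2 - (3 * x - 5 * y) * (x - 3 * y)) * g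
        + (3 * x - 5 * y) * f := by rw [hf, hg]; ring
    rw [this]
    exact dvd_add (d2.mul_left _) (d1.mul_left _)
  have d4 : IsCoprime (Int.gcd f g : ℤ) (y ^ 4) :=
    (hgy.of_isCoprime_of_dvd_left d2).pow_right
  have := d4.dvd_of_dvd_mul_right d3
  exact_mod_cast this

/-- Assuming the abc conjecture, for all sufficiently large primes `p`, every coprime
integer solution of `x³ − 7x²y + 7xy² + 7y³ = k·z^p` with `k ∈ {1, 7, 8, 56}`
has `z = ±1`. -/
theorem abc_implies_trivial_solutions
    (habc : ∀ ε : ℝ, 0 < ε → ∃ K : ℝ, 0 < K ∧ ∀ A B : ℕ, 0 < A → 0 < B →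
      Nat.Coprime A B →
      ((A + B : ℕ) : ℝ) ≤
        K * ((∏ q ∈ (A * B * (A + B)).primeFactors, q : ℕ) : ℝ) ^ ((1 : ℝ) + ε)) :
    ∃ N : ℕ, ∀ p : ℕ, p.Prime → N < p →
      ∀ k : ℤ, (k = 1 ∨ k = 7 ∨ k = 8 ∨ k = 56) →
      ∀ x y z : ℤ, Int.gcd x y = 1 →
        x ^ 3 - 7 * x ^ 2 * y + 7 * x * y ^ 2 + 7 * y ^ 3 = k * z ^ p →
        z = 1 ∨ z = -1 := by
  obtain ⟨M, hM⟩ := core_bound habc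
  refine ⟨max 12 M, ?_⟩
  intro p _ hp k hk x y z hxy heq
  have hp12 : 12 < p := lt_of_le_of_lt (le_max_left _ _) hp
  have hpM : M < p := lt_of_le_of_lt (le_max_right _ _) hp
  have hgcd := gcd_dvd_112 x y hxy
  have hf0 : x ^ 3 - 7 * x ^ 2 * y + 7 * x * y ^ 2 + 7 * y ^ 3 ≠ 0 := by
    intro h0
    have p7 : Prime (7 : ℤ) := by norm_num
    have hx : (7 : ℤ) ∣ x :=
      p7.dvd_of_dvd_pow (n := 3) ⟨x ^ 2 * y - x * y ^ 2 - y ^ 3, by linarith⟩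
    have hy : (7 : ℤ) ∣ y := by
      obtain ⟨t, rfl⟩ := hx
      exact p7.dvd_of_dvd_pow (n := 3) ⟨- 7 * t ^ 3 + 7 * t ^ 2 * y - t * y ^ 2, by linarith⟩
    have := Int.dvd_coe_gcd hx hy
    rw [hxy] at this
    norm_num at this
  set f := x ^ 3 - 7 * x ^ 2 * y + 7 * x * y ^ 2 + 7 * y ^ 3 with hf
  set h := x ^ 2 - 4 * x * y + 7 * y ^ 2 with hh
  have hh0 : 0 ≤ h := by rw [hh]; nlinarith [sq_nonneg (x - 2 * y), sq_nonneg y]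
  have hid : (x ^ 3 + 21 * x ^ 2 * y - 105 * x * y ^ 2 + 91 * y ^ 3) ^ 2 + 27 * f ^ 2
      = 28 * h ^ 3 := by rw [hf, hh]; ring
  set g := x ^ 3 + 21 * x ^ 2 * y - 105 * x * y ^ 2 + 91 * y ^ 3
  have hid' : g.natAbs ^ 2 + 27 * f.natAbs ^ 2 = 28 * h.natAbs ^ 3 := by
    zify
    rw [sq_abs, sq_abs, abs_of_nonneg hh0]
    exact hid
  have hfk : f.natAbs = k.natAbs * z.natAbs ^ p := by
    rw [heq, Int.natAbs_mul, Int.natAbs_pow]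
  have hk' : k.natAbs = 1 ∨ k.natAbs = 7 ∨ k.natAbs = 8 ∨ k.natAbs = 56 := by omega
  have hfpos : 0 < f.natAbs := Int.natAbs_pos.2 hf0
  have hb := hM p k.natAbs g.natAbs f.natAbs h.natAbs z.natAbs hp12.le hk' hid' hgcd hfk hfpos
  by_contra hz
  have hz0 : z ≠ 0 := by
    rintro rfl
    rw [zero_pow (by omega), mul_zero] at heq
    exact hf0 heq
  have hz2 : 2 ≤ z.natAbs := by omega
  have h1 : p < 2 ^ p := Nat.lt_two_pow_self
  have h2 : 2 ^ p ≤ z.natAbs ^ p := Nat.pow_le_pow_left hz2 p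
  have h3 : z.natAbs ^ p ≤ f.natAbs := by
    rw [hfk]; exact Nat.le_mul_of_pos_left _ (by omega)
  have h4 : f.natAbs ≤ f.natAbs ^ 2 := Nat.le_self_pow (by norm_num) _
  omega
end
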